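/- Fix d ≥ 3 and assume E[Z²] < ∞. There exists C < ∞ such that for all x, y ∈ ℤ^d with x ≠ y, if B(x) and B(y) are independent then E[ |B(x) ∩ B(y)| ] ≤ C |x − y|^{−(d−4)}; consequently q(x,y) := P[ B(x) ∩ B(y) ≠ ∅ ] ≤ C |x − y|^{−(d−4)}. -/

import Mathlib

/-!
Common vocabulary: subgraphs of `ℤ^d` (traces of branching random walks), graph
distance, effective resistance (unit edge resistances, via the Dirichlet variational
principle), cut-bonds and cut-points; plane trees coded by finite words, branching
random walk embeddings, and the (discrete) laws of Galton–Watson trees written by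
their elementary weights.
-/

noncomputable section

open MeasureTheory Filter Topology Set

/-- Points of the lattice `ℤ^d`. -/
abbrev Zd (d : ℕ) := Fin d → ℤ

/-- A (sub)graph of `ℤ^d`, given by its vertex set and its (oriented) edge set. -/
structure LatticeGraph (d : ℕ) where
  verts : Set (Zd d)
  edges : Set (Zd d × Zd d)

namespace LatticeGraph

variable {d : ℕ}

/-- `G.IsPath m f a b` : `f` is a path of `m` steps from `a` to `b` using edges of `G`
(in either orientation). -/
def IsPath (G : LatticeGraph d) (m : ℕ) (f : ℕ → Zd d) (a b : Zd d) : Prop :=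
  f 0 = a ∧ f m = b ∧ ∀ i < m, (f i, f (i + 1)) ∈ G.edges ∨ (f (i + 1), f i) ∈ G.edges

def Connected (G : LatticeGraph d) (a b : Zd d) : Prop :=
  ∃ m f, G.IsPath m f a b

/-- Graph distance in `G` (junk value `0` if `a` and `b` are not connected). -/
noncomputable def dist (G : LatticeGraph d) (a b : Zd d) : ℕ :=
  sInf {m : ℕ | ∃ f, G.IsPath m f a b}

/-- Dirichlet energy of `h` on `G` (unit conductances). -/
noncomputable def energy (G : LatticeGraph d) (h : Zd d → ℝ) : ℝ :=
  ∑' e : G.edges, (h (e : Zd d × Zd d).1 - h (e : Zd d × Zd d).2) ^ 2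

/-- Effective resistance between `a` and `b` in `G` with unit resistances on the
edges, defined through the Dirichlet variational principle. -/
noncomputable def effRes (G : LatticeGraph d) (a b : Zd d) : ℝ :=
  (sInf {r : ℝ | ∃ h : Zd d → ℝ, h a = 1 ∧ h b = 0 ∧ r = G.energy h})⁻¹

def deleteEdge (G : LatticeGraph d) (e : Zd d × Zd d) : LatticeGraph d :=
  ⟨G.verts, G.edges \ {e, (e.2, e.1)}⟩

/-- A cut-bond: an edge whose removal disconnects its endpoints. -/
def IsCutBond (G : LatticeGraph d) (e : Zd d × Zd d) : Prop :=
  e ∈ G.edges ∧ ¬ (G.deleteEdge e).Connected e.1 e.2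

/-- A cut-point: the endpoint of a cut-bond lying on the same side as the root `0`. -/
def IsCutPoint (G : LatticeGraph d) (x : Zd d) : Prop :=
  ∃ e, G.IsCutBond e ∧
    ((x = e.1 ∧ (G.deleteEdge e).Connected 0 e.1) ∨
      (x = e.2 ∧ (G.deleteEdge e).Connected 0 e.2))

/-- `G.Sep c a b` : every path from `a` to `b` in `G` passes through `c`. -/
def Sep (G : LatticeGraph d) (c a b : Zd d) : Prop :=
  ∀ m f, G.IsPath m f a b → ∃ i ≤ m, f i = c

/-- `y` is the first cut-point encountered on any path from `x` to the root `0`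
(with the convention that, if no cut-point separates `x` from `0`, `y` is a cut-point
at minimal graph distance from `0`). -/
def IsFirstCutPointFrom (G : LatticeGraph d) (x y : Zd d) : Prop :=
  (G.IsCutPoint y ∧ G.Sep y x 0 ∧ ∀ z, G.IsCutPoint z → G.Sep z x 0 → G.Sep z y 0) ∨
    ((¬ ∃ z, G.IsCutPoint z ∧ G.Sep z x 0) ∧ G.IsCutPoint y ∧
      ∀ z, G.IsCutPoint z → G.dist 0 y ≤ G.dist 0 z)

/-- The point `π_n(x)` of the paper. -/
noncomputable def firstCutPoint (G : LatticeGraph d) (x : Zd d) : Zd d :=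
  Classical.epsilon (G.IsFirstCutPointFrom x)

end LatticeGraph

/-! ### Plane trees and branching random walk embeddings -/

/-- A (plane) tree as a set of finite words: contains the root, is closed under
taking parents and under taking younger siblings. -/
def IsPlaneTree (t : Set (List ℕ)) : Prop :=
  [] ∈ t ∧ (∀ (w : List ℕ) (k : ℕ), w ++ [k] ∈ t → w ∈ t) ∧
    ∀ (w : List ℕ) (j k : ℕ), j ≤ k → w ++ [k] ∈ t → w ++ [j] ∈ t

/-- Number of children of the vertex `w` in the tree `t`. -/
noncomputable def childCount (t : Set (List ℕ)) (w : List ℕ) : ℕ :=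
  Set.ncard {k : ℕ | w ++ [k] ∈ t}

/-- A nearest-neighbour step of `ℤ^d`. -/
def IsUnitStep {d : ℕ} (v : Zd d) : Prop :=
  ∃ i : Fin d, (∀ j, j ≠ i → v j = 0) ∧ (v i = 1 ∨ v i = -1)

/-- `g` assigns nearest-neighbour increments along the edges of `t`. -/
def IsBRWEmbedding {d : ℕ} (t : Set (List ℕ)) (g : List ℕ → Zd d) : Prop :=
  ∀ w ∈ t, w ≠ [] → IsUnitStep (g w - g w.dropLast)

/-- The trace of the spatial tree `(t, g)`: the subgraph of `ℤ^d` whose vertices are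
the images of the vertices of `t` and whose edges are the images of the edges of `t`. -/
def traceGraph (d : ℕ) (t : Set (List ℕ)) (g : List ℕ → Zd d) : LatticeGraph d :=
  ⟨g '' t, {e | ∃ w ∈ t, w ≠ ([] : List ℕ) ∧ e = (g w.dropLast, g w)}⟩

open scoped ENNReal

/-- The Galton–Watson weight of a finite plane tree `t` for the offspring law `p`:
`∏_{v ∈ t} p(number of children of v)`. -/
noncomputable def gwWeight (p : PMF ℕ) (t : Set (List ℕ)) : ℝ≥0∞ :=
  ∏ᶠ w ∈ t, p (childCount t w)

/-- The weight of a "bush": the root has `Z̃ - 1` children (`Z̃` the size-biased law,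
`P[Z̃ = k] = k p_k`), each of which generates an independent critical Galton–Watson
tree with offspring law `p`. -/
noncomputable def bushWeight (p : PMF ℕ) (t : Set (List ℕ)) : ℝ≥0∞ :=
  ((childCount t [] + 1 : ℕ) : ℝ≥0∞) * p (childCount t [] + 1) *
    ∏ᶠ w ∈ t \ {([] : List ℕ)}, p (childCount t w)

/-! ### Moment conditions on the offspring law -/

def HasMeanOne (p : PMF ℕ) : Prop := ∑' k : ℕ, (k : ℝ) * (p k).toReal = 1

def FiniteSecondMoment (p : PMF ℕ) : Prop :=
  Summable fun k : ℕ => (k : ℝ) ^ 2 * (p k).toReal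

def PosVariance (p : PMF ℕ) : Prop :=
  0 < ∑' k : ℕ, ((k : ℝ) - 1) ^ 2 * (p k).toReal

def HasExpMoment (p : PMF ℕ) : Prop :=
  ∃ lam : ℝ, 0 < lam ∧ Summable fun k : ℕ => Real.exp (lam * k) * (p k).toReal

/-- The offspring distribution is non-lattice (aperiodic). -/
def AperiodicSupport (p : PMF ℕ) : Prop :=
  ∀ m : ℕ, 2 ≤ m → ∃ k : ℕ, p k ≠ 0 ∧ ¬ ((m : ℤ) ∣ ((k : ℤ) - 1))

/-- Standard deviation `σ_Z` of the offspring law (which has mean one). -/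
noncomputable def sigmaZ (p : PMF ℕ) : ℝ :=
  Real.sqrt (∑' k : ℕ, ((k : ℝ) - 1) ^ 2 * (p k).toReal)

/-- Euclidean distance on `ℤ^d`. -/
noncomputable def euclDist {d : ℕ} (x y : Zd d) : ℝ :=
  Real.sqrt (∑ i, ((x i : ℝ) - (y i : ℝ)) ^ 2)

/-!
STATEMENT 14.  Two independent bushes `B(x)`, `B(y)` rooted at `x` and `y`:
the root of each modified tree has `Z̃ - 1` offspring, each generating an independent
critical Galton–Watson tree with offspring law `p`; the embeddings assign independent
uniform nearest-neighbour increments along the edges.  The joint law is completely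
specified by `hlaw` (product of the two bush laws).
-/
structure TwoBushModel (d : ℕ) (p : PMF ℕ) (x y : Zd d) where
  Ω : Type
  mΩ : MeasurableSpace Ω
  P : @Measure Ω mΩ
  hP : IsProbabilityMeasure P
  tree1 : Ω → Set (List ℕ)
  tree2 : Ω → Set (List ℕ)
  emb1 : Ω → List ℕ → Zd d
  emb2 : Ω → List ℕ → Zd d
  htree1 : ∀ ω, IsPlaneTree (tree1 ω) ∧ (tree1 ω).Finite
  htree2 : ∀ ω, IsPlaneTree (tree2 ω) ∧ (tree2 ω).Finite
  hroot1 : ∀ ω, emb1 ω ([] : List ℕ) = x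
  hroot2 : ∀ ω, emb2 ω ([] : List ℕ) = y
  hemb1 : ∀ ω, IsBRWEmbedding (tree1 ω) (emb1 ω)
  hemb2 : ∀ ω, IsBRWEmbedding (tree2 ω) (emb2 ω)
  hlaw : ∀ t1 t2 : Set (List ℕ), IsPlaneTree t1 → t1.Finite → IsPlaneTree t2 → t2.Finite →
    ∀ g1 g2 : List ℕ → Zd d,
      g1 ([] : List ℕ) = x → IsBRWEmbedding t1 g1 →
      g2 ([] : List ℕ) = y → IsBRWEmbedding t2 g2 →
    P {ω | tree1 ω = t1 ∧ (∀ v ∈ t1, emb1 ω v = g1 v) ∧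
        tree2 ω = t2 ∧ ∀ v ∈ t2, emb2 ω v = g2 v}
      = bushWeight p t1 * bushWeight p t2 *
          ((2 * d : ℕ) : ℝ≥0∞)⁻¹ ^ (t1.ncard - 1 + (t2.ncard - 1))

/-!
Let `A` be the transition operator of the walk, `h(z)` the probability that the branching random
walk started at `0` visits `z`, and `δ₀` the indicator of the origin. Decomposing at the root, a
visit to `z ≠ 0` is a visit by one of the subtrees, so the Bonferroni inequality gives
`h + c (A h)² ≤ A h + δ₀`, with `c` the probability of at least two children. The bush has hitting
function at most `δ₀` plus a multiple of `A h`, so the expected intersection is controlled by the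
convolution of `h` with its reflection.

* If `d ≤ 4`, summing the recursion over `ℤ^d` cancels the linear terms and bounds `c ∑ (A h)²`
  by `1`; Cauchy–Schwarz bounds the expectation uniformly, and `|x - y|^{4 - d} ≥ 1`.
* If `d ≥ 5`, `h ≤ A h + δ₀` is compared with supersolutions: a multiple of `(|z|² + a)^{-(d-2)/2}`
  dominates `h`, and a multiple of `(|z|² + a)^{-(d-4)/2}` dominates the convolution.

Restricting to trees of bounded height keeps all the sums finite.
-/

/-! ### Symmetric second differences of powers -/

lemma exists_one_add_rpow_add_one_sub_rpow_le (a : ℝ) :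
    ∃ K, 0 ≤ K ∧ ∀ y : ℝ, |y| ≤ 1 / 2 →
      (1 + y) ^ a + (1 - y) ^ a ≤ 2 + a * (a - 1) * y ^ 2 + K * y ^ 4 := by
  obtain ⟨r, ⟨hr, -⟩, C, hC, happrox⟩ :=
    (Real.one_add_rpow_hasFPowerSeriesOnBall_zero (a := a)).uniform_geometric_approx'
      (r' := 3 / 4) (by exact_mod_cast (by norm_num : (3 / 4 : NNReal) < 1))
  have hpartial (y : ℝ) : (binomialSeries ℝ a).partialSum 4 y =
      1 + a * y + a * (a - 1) / 2 * y ^ 2 + Ring.choose a 3 * y ^ 3 := by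
    have hchoose : Ring.choose a 2 = a * (a - 1) / 2 := by
      simp only [Ring.choose_eq_smul, Nat.factorial_two, Nat.cast_ofNat, descPochhammer_succ_right,
        descPochhammer_zero, CharP.cast_eq_zero, sub_zero, one_mul, Nat.cast_one, pow_one, pow_zero,
        Polynomial.smeval_mul, Polynomial.smeval_X, Polynomial.smeval_sub, Polynomial.smeval_one,
        one_smul, smul_eq_mul]
      ring
    simp only [FormalMultilinearSeries.partialSum, binomialSeries, Finset.prod_const,
      FormalMultilinearSeries.apply_eq_prod_smul_coeff, FormalMultilinearSeries.coeff_ofScalars,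
      Finset.card_univ, Fintype.card_fin, smul_eq_mul, Finset.sum_range_succ, Finset.range_one,
      Finset.sum_singleton, pow_zero, pow_one, mul_one, Ring.choose_zero_right',
      Ring.choose_one_right', hchoose]
    ring
  have htaylor (y : ℝ) (hy : |y| ≤ 1 / 2) :
      (1 + y) ^ a ≤ 1 + a * y + a * (a - 1) / 2 * y ^ 2 + Ring.choose a 3 * y ^ 3
        + C * (r / (3 / 4)) ^ 4 * y ^ 4 := by
    have h := happrox y (by simpa using hy.trans_lt (by norm_num)) 4
    rw [hpartial, zero_add, Real.norm_eq_abs, Real.norm_eq_abs] at h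
    have hpow : (r * (|y| / ((3 / 4 : NNReal) : ℝ))) ^ 4 = (r / (3 / 4)) ^ 4 * y ^ 4 := by
      rw [← (Even.pow_abs (by decide) y : |y| ^ 4 = y ^ 4)]
      push_cast
      ring
    rw [hpow] at h
    linarith [le_abs_self ((1 + y) ^ a -
      (1 + a * y + a * (a - 1) / 2 * y ^ 2 + Ring.choose a 3 * y ^ 3))]
  refine ⟨2 * (C * (r / (3 / 4)) ^ 4), by positivity, fun y hy => ?_⟩
  have hpos := htaylor y hy
  have hneg := htaylor (-y) (by rwa [abs_neg])
  rw [← sub_eq_add_neg] at hneg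
  linarith

lemma exists_add_rpow_add_sub_rpow_le (a : ℝ) :
    ∃ K, 0 ≤ K ∧ ∀ ρ t : ℝ, 0 < ρ → |t| ≤ ρ / 2 →
      (ρ + t) ^ a + (ρ - t) ^ a ≤
        ρ ^ a * (2 + a * (a - 1) * (t / ρ) ^ 2 + K * (t / ρ) ^ 4) := by
  obtain ⟨K, hK, hbound⟩ := exists_one_add_rpow_add_one_sub_rpow_le a
  refine ⟨K, hK, fun ρ t hρ ht => ?_⟩
  have hratio : |t / ρ| ≤ 1 / 2 := by
    rw [abs_div, abs_of_pos hρ, div_le_iff₀ hρ]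
    linarith
  obtain ⟨hlow, hhigh⟩ := abs_le.1 hratio
  calc (ρ + t) ^ a + (ρ - t) ^ a
      = (ρ * (1 + t / ρ)) ^ a + (ρ * (1 - t / ρ)) ^ a := by
        congr 2 <;> field_simp
    _ = ρ ^ a * ((1 + t / ρ) ^ a + (1 - t / ρ) ^ a) := by
        rw [Real.mul_rpow hρ.le (by linarith), Real.mul_rpow hρ.le (by linarith), mul_add]
    _ ≤ _ := mul_le_mul_of_nonneg_left (hbound _ hratio) (by positivity)

lemma exists_add_two_mul_rpow_add_sub_rpow_le (a : ℝ) :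
    ∃ K, ∀ ρ t : ℝ, t ^ 2 + 4 ≤ ρ →
      (ρ + 2 * t) ^ a + (ρ - 2 * t) ^ a ≤
        ρ ^ a * (2 + 4 * a * (a - 1) / ρ ^ 2 * t ^ 2 + K * (4 / ρ) ^ 2) := by
  obtain ⟨K, hK, hbound⟩ := exists_add_rpow_add_sub_rpow_le a
  refine ⟨K, fun ρ t ht => ?_⟩
  have hρ : 0 < ρ := by linarith [sq_nonneg t]
  have hsmall : |2 * t| ≤ ρ / 2 := by
    rw [abs_le]
    constructor <;> nlinarith [sq_nonneg (t - 2), sq_nonneg (t + 2)]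
  have hsq : (2 * t / ρ) ^ 2 ≤ 4 / ρ := by
    rw [div_pow, div_le_div_iff₀ (by positivity) hρ]
    nlinarith
  calc _ ≤ _ := hbound ρ _ hρ hsmall
    _ = ρ ^ a * (2 + a * (a - 1) * (2 * t / ρ) ^ 2 + K * ((2 * t / ρ) ^ 2) ^ 2) := by ring
    _ ≤ ρ ^ a * (2 + a * (a - 1) * (2 * t / ρ) ^ 2 + K * (4 / ρ) ^ 2) := by gcongr
    _ = _ := by ring_nf

lemma rpow_neg_mul_one_add_div_le {s ρ : ℝ} (hs : 0 ≤ s) (hρ : 1 < ρ) :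
    ρ ^ (-s) * (1 + s / ρ) ≤ (ρ - 1) ^ (-s) := by
  have hpos : 0 < 1 - 1 / ρ := by
    rw [sub_pos, div_lt_one (by linarith)]
    exact hρ
  have hlog : s / ρ ≤ Real.log (1 - 1 / ρ) * -s := by
    have := mul_le_mul_of_nonneg_left (Real.log_le_sub_one_of_pos hpos) hs
    calc s / ρ = -(s * (1 - 1 / ρ - 1)) := by ring
      _ ≤ Real.log (1 - 1 / ρ) * -s := by linarith
  calc ρ ^ (-s) * (1 + s / ρ) ≤ ρ ^ (-s) * (1 - 1 / ρ) ^ (-s) := by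
        gcongr
        rw [Real.rpow_def_of_pos hpos]
        linarith [Real.add_one_le_exp (s / ρ), Real.exp_le_exp.2 hlog]
    _ = (ρ - 1) ^ (-s) := by
        rw [← Real.mul_rpow (by linarith) hpos.le, mul_sub, mul_one_div_cancel (by linarith),
          mul_one]

/-! ### Simple random walk on the lattice -/

/-- The `2d` directions of `ℤ^d`: a coordinate and a sign. -/
abbrev Dir (d : ℕ) := Fin d × ℤˣ

/-- The nearest-neighbour step in a given direction. -/
def latticeStep {d : ℕ} (e : Dir d) : Zd d := Pi.single e.1 (e.2 : ℤ)

/-- The squared Euclidean norm of a lattice point, as a real number. -/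
def sqNorm {d : ℕ} (x : Zd d) : ℝ := ∑ i, (x i : ℝ) ^ 2

lemma sqNorm_nonneg {d : ℕ} (x : Zd d) : 0 ≤ sqNorm x :=
  Finset.sum_nonneg fun _ _ => sq_nonneg _

lemma sq_apply_le_sqNorm {d : ℕ} (x : Zd d) (i : Fin d) : (x i : ℝ) ^ 2 ≤ sqNorm x :=
  Finset.single_le_sum (f := fun i => (x i : ℝ) ^ 2) (fun _ _ => sq_nonneg _) (Finset.mem_univ i)

lemma one_le_sqNorm {d : ℕ} {x : Zd d} (hx : x ≠ 0) : 1 ≤ sqNorm x := by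
  obtain ⟨i, hi⟩ := Function.ne_iff.1 hx
  refine le_trans ?_ (sq_apply_le_sqNorm x i)
  exact_mod_cast Int.add_one_le_iff.2 (sq_pos_of_ne_zero hi)

lemma sqNorm_sub_latticeStep {d : ℕ} (x : Zd d) (e : Dir d) :
    sqNorm (x - latticeStep e) = sqNorm x + 1 - 2 * ((e.2 : ℤ) : ℝ) * x e.1 := by
  have hsign : ((e.2 : ℤ) : ℝ) ^ 2 = 1 := by exact_mod_cast Int.isUnit_sq e.2.isUnit
  have hcoord (i : Fin d) : (((x - latticeStep e) i : ℤ) : ℝ) ^ 2 =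
      (x i : ℝ) ^ 2 + if i = e.1 then 1 - 2 * ((e.2 : ℤ) : ℝ) * x e.1 else 0 := by
    by_cases hi : i = e.1
    · subst hi
      simp only [latticeStep, Pi.sub_apply, Pi.single_eq_same, Int.cast_sub, if_true]
      linear_combination hsign
    · simp [latticeStep, hi]
  simp only [sqNorm, hcoord, Finset.sum_add_distrib, Finset.sum_ite_eq', Finset.mem_univ, if_true]
  ring

lemma card_dir (d : ℕ) : Fintype.card (Dir d) = 2 * d := by
  rw [Fintype.card_prod, Fintype.card_fin, Fintype.card_units_int, mul_comm]

lemma exists_average_sqNorm_add_rpow_le (d : ℕ) [NeZero d] (a : ℝ) :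
    ∃ K, ∀ A : ℝ, 3 ≤ A → ∀ x : Zd d,
      ((2 * d : ℕ) : ℝ)⁻¹ * ∑ e : Dir d, (sqNorm (x - latticeStep e) + A) ^ a ≤
        (sqNorm x + A + 1) ^ a *
          (1 + (2 * a * (a - 1) / d * sqNorm x + K) / (sqNorm x + A + 1) ^ 2) := by
  obtain ⟨K, hbound⟩ := exists_add_two_mul_rpow_add_sub_rpow_le a
  refine ⟨8 * K, fun A hA x => ?_⟩
  set ρ := sqNorm x + A + 1 with hρ
  have hρ0 : 0 < ρ := by linarith [sqNorm_nonneg x]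
  have hd : (0 : ℝ) < d := Nat.cast_pos.2 (NeZero.pos d)
  calc ((2 * d : ℕ) : ℝ)⁻¹ * ∑ e : Dir d, (sqNorm (x - latticeStep e) + A) ^ a
      = ((2 * d : ℕ) : ℝ)⁻¹ * ∑ i, ((ρ + 2 * x i) ^ a + (ρ - 2 * x i) ^ a) := by
        simp only [Fintype.sum_prod_type, UnitsInt.univ, sqNorm_sub_latticeStep, hρ]
        congr! 2 with i
        rw [Finset.sum_pair (by decide), add_comm]
        push_cast
        ring_nf
    _ ≤ ((2 * d : ℕ) : ℝ)⁻¹ * ∑ i : Fin d,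
          ρ ^ a * (2 + 4 * a * (a - 1) / ρ ^ 2 * (x i : ℝ) ^ 2 + K * (4 / ρ) ^ 2) := by
        gcongr with i
        exact hbound ρ _ (by linarith [sq_apply_le_sqNorm x i])
    _ = ((2 * d : ℕ) : ℝ)⁻¹ *
          (ρ ^ a * (d * 2 + 4 * a * (a - 1) / ρ ^ 2 * sqNorm x + d * (K * (4 / ρ) ^ 2))) := by
        simp only [← Finset.mul_sum, Finset.sum_add_distrib, Finset.sum_const, Finset.card_univ,
          Fintype.card_fin, nsmul_eq_mul, mul_left_comm (d : ℝ) K, sqNorm]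
    _ = ρ ^ a * (1 + (2 * a * (a - 1) / d * sqNorm x + 8 * K) / ρ ^ 2) := by
        push_cast
        field_simp
        ring

/-- `|x|² + A` to the power `-s`, the prototype of a superharmonic function of the walk. -/
def radial {d : ℕ} (A s : ℝ) (x : Zd d) : ℝ := (sqNorm x + A) ^ (-s)

lemma one_add_div_sq_add_div_sq_le {κ K s q B : ℝ} (hρ : 0 < q + B) (hB : K + 1 ≤ κ * B) :
    1 + (κ * q + K) / (q + B) ^ 2 + (1 + (s - κ) * (q + B)) / (q + B) ^ 2 ≤ 1 + s / (q + B) := by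
  rw [add_assoc, ← add_div, add_le_add_iff_left, div_le_div_iff₀ (by positivity) hρ, sq,
    ← mul_assoc]
  gcongr
  linarith

lemma exists_average_radial_add_le (d : ℕ) [NeZero d] {s : ℝ} (hs : 0 < s) :
    ∃ A₀, ∀ A, A₀ ≤ A → 3 ≤ A → ∀ x : Zd d,
      ((2 * d : ℕ) : ℝ)⁻¹ * ∑ e : Dir d, radial A s (x - latticeStep e) +
        radial (A + 1) (s + 2) x * (1 + s * (1 - 2 * (s + 1) / d) * (sqNorm x + (A + 1)))
          ≤ radial A s x := by
  obtain ⟨K, haverage⟩ := exists_average_sqNorm_add_rpow_le d (-s)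
  have hd : (0 : ℝ) < d := Nat.cast_pos.2 (NeZero.pos d)
  set κ : ℝ := 2 * s * (s + 1) / d with hκ
  have hκ0 : 0 < κ := by positivity
  refine ⟨(K + 1) / κ, fun A hA₀ hA x => ?_⟩
  rw [div_le_iff₀' hκ0] at hA₀
  have hq := sqNorm_nonneg x
  have haverage := haverage A hA x
  rw [show 2 * -s * (-s - 1) / d = κ by rw [hκ]; ring] at haverage
  rw [show s * (1 - 2 * (s + 1) / d) = s - κ by rw [hκ]; ring]
  have hbernoulli := rpow_neg_mul_one_add_div_le hs.le (show 1 < sqNorm x + (A + 1) by linarith)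
  rw [add_sub_assoc, add_sub_cancel_right] at hbernoulli
  have hbracket := one_add_div_sq_add_div_sq_le (s := s) (q := sqNorm x) (B := A + 1)
    (by linarith) (show K + 1 ≤ κ * (A + 1) by linarith)
  simp only [radial]
  rw [add_assoc (sqNorm x)] at haverage
  set ρ := sqNorm x + (A + 1)
  have hρ0 : 0 < ρ := by positivity
  have hpow : ρ ^ (-(s + 2)) = ρ ^ (-s) / ρ ^ 2 := by
    rw [neg_add, ← sub_eq_add_neg, Real.rpow_sub hρ0, Real.rpow_two]
  rw [hpow]
  calc _ ≤ ρ ^ (-s) * (1 + (κ * sqNorm x + K) / ρ ^ 2) +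
        ρ ^ (-s) / ρ ^ 2 * (1 + (s - κ) * ρ) := by gcongr
    _ = ρ ^ (-s) * (1 + (κ * sqNorm x + K) / ρ ^ 2 + (1 + (s - κ) * ρ) / ρ ^ 2) := by ring
    _ ≤ ρ ^ (-s) * (1 + s / ρ) := by gcongr
    _ ≤ _ := hbernoulli

lemma radial_nonneg {d : ℕ} {A : ℝ} (hA : 0 ≤ A) (s : ℝ) (x : Zd d) : 0 ≤ radial A s x :=
  Real.rpow_nonneg (add_nonneg (sqNorm_nonneg x) hA) _

lemma exists_average_radial_add_delta_le (d : ℕ) [NeZero d] {s : ℝ} (hs : 0 < s)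
    (hsd : 2 * (s + 1) ≤ d) :
    ∃ A₀, ∀ A, A₀ ≤ A → 3 ≤ A → ∃ c : ℝ, 0 < c ∧ ∀ x : Zd d,
      ((2 * d : ℕ) : ℝ)⁻¹ * ∑ e : Dir d, radial A s (x - latticeStep e) +
        c * ({0} : Set (Zd d)).indicator 1 x ≤ radial A s x := by
  obtain ⟨A₀, haverage⟩ := exists_average_radial_add_le d hs
  refine ⟨A₀, fun A hA₀ hA => ⟨radial (A + 1) (s + 2) (0 : Zd d), ?_, fun x => ?_⟩⟩
  · exact Real.rpow_pos_of_pos (by linarith [sqNorm_nonneg (0 : Zd d)]) _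
  refine le_trans (add_le_add_right ?_ _) (haverage A hA₀ hA x)
  have hcoeff : 0 ≤ s * (1 - 2 * (s + 1) / d) * (sqNorm x + (A + 1)) := by
    have : 2 * (s + 1) / d ≤ 1 := div_le_one_of_le₀ hsd (Nat.cast_nonneg d)
    have := sqNorm_nonneg x
    apply mul_nonneg (mul_nonneg _ _) <;> linarith
  have hradial := radial_nonneg (show 0 ≤ A + 1 by linarith) (s + 2) x
  by_cases hx : x = 0
  · subst hx
    simpa using le_mul_of_one_le_right hradial (by linarith)
  · simpa [hx] using mul_nonneg hradial (by linarith)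

lemma exists_average_radial_add_radial_le (d : ℕ) [NeZero d] {s : ℝ} (hs : 0 < s)
    (hsd : 2 * (s + 1) < d) :
    ∃ A₀, ∀ A, A₀ ≤ A → 3 ≤ A → ∃ c : ℝ, 0 < c ∧ ∀ x : Zd d,
      ((2 * d : ℕ) : ℝ)⁻¹ * ∑ e : Dir d, radial A s (x - latticeStep e) +
        c * radial A (s + 1) x ≤ radial A s x := by
  obtain ⟨A₀, haverage⟩ := exists_average_radial_add_le d hs
  have hgap : 0 < 1 - 2 * (s + 1) / d := by
    rw [sub_pos, div_lt_one (by linarith)]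
    exact hsd
  refine ⟨A₀, fun A hA₀ hA => ⟨s * (1 - 2 * (s + 1) / d) * 2 ^ (-(s + 1)), by positivity,
    fun x => le_trans (add_le_add_right ?_ _) (haverage A hA₀ hA x)⟩⟩
  have hq := sqNorm_nonneg x
  have hρ : 0 < sqNorm x + (A + 1) := by linarith
  have hdouble : 2 ^ (-(s + 1)) * radial A (s + 1) x ≤ radial (A + 1) (s + 1) x := by
    rw [radial, radial, ← Real.mul_rpow zero_le_two (by linarith)]
    exact Real.rpow_le_rpow_of_nonpos hρ (by linarith) (by linarith)
  have hshift : radial (A + 1) (s + 2) x * (sqNorm x + (A + 1)) = radial (A + 1) (s + 1) x := by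
    rw [radial, radial, ← Real.rpow_add_one hρ.ne']
    ring_nf
  calc s * (1 - 2 * (s + 1) / d) * 2 ^ (-(s + 1)) * radial A (s + 1) x
      ≤ s * (1 - 2 * (s + 1) / d) * radial (A + 1) (s + 1) x := by
        rw [mul_assoc]
        gcongr
    _ = radial (A + 1) (s + 2) x * (s * (1 - 2 * (s + 1) / d) * (sqNorm x + (A + 1))) := by
        rw [← hshift]
        ring
    _ ≤ _ := by
        gcongr
        · exact radial_nonneg (by linarith) _ _
        · exact le_add_of_nonneg_left zero_le_one

lemma exists_supersolutions (d : ℕ) (hd : 5 ≤ d) :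
    ∃ (K : ℝ) (f ψ : Zd d → ℝ), 0 ≤ f ∧ 0 ≤ ψ ∧
      (∀ x, ((2 * d : ℕ) : ℝ)⁻¹ * ∑ e : Dir d, f (x - latticeStep e) +
        ({0} : Set (Zd d)).indicator 1 x ≤ f x) ∧
      (∀ x, ((2 * d : ℕ) : ℝ)⁻¹ * ∑ e : Dir d, ψ (x - latticeStep e) + f x ≤ ψ x) ∧
      ∀ x, x ≠ 0 → ψ x ≤ K * √(sqNorm x) ^ (-((d : ℝ) - 4)) := by
  have : NeZero d := ⟨by omega⟩
  have hd' : (5 : ℝ) ≤ d := by exact_mod_cast hd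
  set s : ℝ := ((d : ℝ) - 4) / 2 with hs
  have hs0 : 0 < s := by linarith
  obtain ⟨A₁, h₁⟩ := exists_average_radial_add_delta_le d (s := s + 1) (by linarith) (by linarith)
  obtain ⟨A₂, h₂⟩ := exists_average_radial_add_radial_le d hs0 (by linarith)
  set A := max 3 (max A₁ A₂)
  have hA : 3 ≤ A := le_max_left _ _
  obtain ⟨c₁, hc₁, hf⟩ := h₁ A (by simp [A]) hA
  obtain ⟨c₂, hc₂, hψ⟩ := h₂ A (by simp [A]) hA
  refine ⟨(c₂ * c₁)⁻¹, fun x => c₁⁻¹ * radial A (s + 1) x, fun x => (c₂ * c₁)⁻¹ * radial A s x,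
    fun x => ?_, fun x => ?_, fun x => ?_, fun x => ?_, fun x hx => ?_⟩
  · exact mul_nonneg (by positivity) (radial_nonneg (by linarith) _ _)
  · exact mul_nonneg (by positivity) (radial_nonneg (by linarith) _ _)
  · refine le_trans (le_of_eq ?_) (mul_le_mul_of_nonneg_left (hf x) (inv_nonneg.2 hc₁.le))
    rw [mul_add, inv_mul_cancel_left₀ hc₁.ne', ← Finset.mul_sum, mul_left_comm]
  · refine le_trans (le_of_eq ?_)
      (mul_le_mul_of_nonneg_left (hψ x) (inv_nonneg.2 (mul_pos hc₂ hc₁).le))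
    rw [← Finset.mul_sum]
    field_simp
  · have hq : 0 < sqNorm x := by linarith [one_le_sqNorm hx]
    rw [Real.sqrt_eq_rpow, ← Real.rpow_mul hq.le, show 1 / 2 * -((d : ℝ) - 4) = -s by ring]
    exact mul_le_mul_of_nonneg_left
      (Real.rpow_le_rpow_of_nonpos hq (by linarith) (by linarith)) (by positivity)

/-! ### Hitting probabilities of independent tuples -/

lemma mul_le_sq_add_sq (a b : ℝ≥0∞) : a * b ≤ a ^ 2 + b ^ 2 := by
  rcases le_total a b with h | h
  · calc a * b ≤ b * b := by gcongr
      _ = b ^ 2 := (sq b).symm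
      _ ≤ a ^ 2 + b ^ 2 := le_add_self
  · calc a * b ≤ a * a := by gcongr
      _ = a ^ 2 := (sq a).symm
      _ ≤ a ^ 2 + b ^ 2 := le_self_add

lemma add_sq_le_three_mul (a b : ℝ≥0∞) : (a + b) ^ 2 ≤ 3 * (a ^ 2 + b ^ 2) :=
  calc (a + b) ^ 2 = a ^ 2 + b ^ 2 + 2 * (a * b) := by ring
    _ ≤ a ^ 2 + b ^ 2 + 2 * (a ^ 2 + b ^ 2) := by gcongr; exact mul_le_sq_add_sq a b
    _ = 3 * (a ^ 2 + b ^ 2) := by ring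

lemma add_pow_add_sq_le {h b : ℝ} (hh : 0 ≤ h) (hb : 0 ≤ b) (hhb : h + b ≤ 1) {k : ℕ}
    (hk : 2 ≤ k) : (h + b) ^ k + h ^ 2 ≤ k * h + b ^ k := by
  induction k, hk using Nat.le_induction with
  | base => push_cast; nlinarith
  | succ k _ ih =>
    have hpow : (h + b) ^ k ≤ 1 := pow_le_one₀ (by linarith) hhb
    have hmono : b ^ k ≤ (h + b) ^ k := pow_le_pow_left₀ hb (by linarith) k
    push_cast
    rw [pow_succ, pow_succ b]
    nlinarith [mul_nonneg hh (sub_nonneg.2 hpow),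
      mul_nonneg (sub_nonneg.2 hmono) (show 0 ≤ 1 - b by linarith)]

lemma add_pow_add_indicator_le {h b : ℝ≥0∞} (hhb : h + b ≤ 1) (k : ℕ) :
    (h + b) ^ k + {j | 2 ≤ j}.indicator (fun _ => h ^ 2) k ≤ k * h + b ^ k := by
  have hh : h ≠ ⊤ := ne_top_of_le_ne_top ENNReal.one_ne_top (le_self_add.trans hhb)
  have hb : b ≠ ⊤ := ne_top_of_le_ne_top ENNReal.one_ne_top (le_add_self.trans hhb)
  match k with
  | 0 => simp
  | 1 => simp
  | k + 2 =>
    lift h to NNReal using hh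
    lift b to NNReal using hb
    rw [indicator_of_mem (show k + 2 ∈ {j | 2 ≤ j} from Nat.le_add_left 2 k)]
    exact_mod_cast add_pow_add_sq_le h.2 b.2 (by exact_mod_cast hhb) (Nat.le_add_left 2 k)

section Tuples

variable {X : Type*}

lemma tsum_fin_prod {k : ℕ} (w : Fin k → X → ℝ≥0∞) :
    ∑' x : Fin k → X, ∏ i, w i (x i) = ∏ i, ∑' y, w i y := by
  induction k with
  | zero => simp
  | succ k ih =>
    rw [← (Fin.consEquiv fun _ => X).tsum_eq, ENNReal.tsum_prod']
    simp only [Fin.consEquiv_apply, Fin.prod_univ_succ, Fin.cons_zero, Fin.cons_succ,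
      ENNReal.tsum_mul_left, ENNReal.tsum_mul_right, ih]

/-- The mass of the `k`-tuples meeting `E`, when the entries are independent of weight `w`. -/
def tupleHit (w : X → ℝ≥0∞) (E : Set X) (k : ℕ) : ℝ≥0∞ :=
  ∑' x : Fin k → X, {x : Fin k → X | ∃ i, x i ∈ E}.indicator (fun x => ∏ i, w (x i)) x

lemma tsum_indicator_add_tsum_indicator_compl (w : X → ℝ≥0∞) (E : Set X) :
    ∑' x, E.indicator w x + ∑' x, Eᶜ.indicator w x = ∑' x, w x := by
  rw [← ENNReal.tsum_add]
  exact tsum_congr fun x => congrFun (indicator_self_add_compl E w) x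

lemma tupleHit_add_pow (w : X → ℝ≥0∞) (E : Set X) (k : ℕ) :
    tupleHit w E k + (∑' x, Eᶜ.indicator w x) ^ k = (∑' x, w x) ^ k := by
  have hmiss (x : Fin k → X) : ∏ i, Eᶜ.indicator w (x i) =
      {x : Fin k → X | ∃ i, x i ∈ E}ᶜ.indicator (fun x => ∏ i, w (x i)) x := by
    by_cases hx : ∃ i, x i ∈ E
    · rw [indicator_of_notMem (by simpa using hx)]
      obtain ⟨i, hi⟩ := hx
      exact Finset.prod_eq_zero (Finset.mem_univ i) (indicator_of_notMem (by simpa using hi) w)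
    · rw [indicator_of_mem (by simpa using hx)]
      exact Finset.prod_congr rfl fun i _ =>
        indicator_of_mem (show x i ∈ Eᶜ from fun hi => hx ⟨i, hi⟩) w
  have hpow (a : X → ℝ≥0∞) : (∑' x, a x) ^ k = ∑' x : Fin k → X, ∏ i, a (x i) := by
    simp [tsum_fin_prod fun _ : Fin k => a]
  rw [hpow, hpow, tsum_congr hmiss]
  exact tsum_indicator_add_tsum_indicator_compl _ _

/- Bonferroni: inclusion–exclusion truncated after one pair of entries. -/
lemma tupleHit_add_indicator_le {w : X → ℝ≥0∞} (hw : ∑' x, w x ≤ 1) (E : Set X) (k : ℕ) :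
    tupleHit w E k + {j | 2 ≤ j}.indicator (fun _ => (∑' x, E.indicator w x) ^ 2) k ≤
      k * ∑' x, E.indicator w x := by
  have hpartition := tsum_indicator_add_tsum_indicator_compl w E
  have hmiss : (∑' x, Eᶜ.indicator w x) ^ k ≠ ⊤ :=
    ENNReal.pow_ne_top (ne_top_of_le_ne_top ENNReal.one_ne_top
      ((le_add_self.trans hpartition.le).trans hw))
  rw [← ENNReal.add_le_add_iff_right hmiss, add_right_comm, tupleHit_add_pow, ← hpartition]
  exact add_pow_add_indicator_le (hpartition.trans_le hw) k

end Tuples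

/-! ### Averages over the steps of a random walk -/

section WalkAverage

variable {G ι : Type*} [AddCommGroup G] (μ : PMF ι) (v : ι → G)

/-- The transition operator of the random walk on `G` whose increment is `v e` with
probability `μ e`, acting on nonnegative functions by `(Af)(z) = ∑ₑ μ(e) f(z - v(e))`. -/
def walkAverage (f : G → ℝ≥0∞) (z : G) : ℝ≥0∞ := ∑' e, μ e * f (z - v e)

lemma monotone_walkAverage : Monotone (walkAverage μ v) :=
  fun _ _ h _ => ENNReal.tsum_le_tsum fun _ => mul_le_mul_right (h _) _

lemma walkAverage_le_one {f : G → ℝ≥0∞} (hf : ∀ z, f z ≤ 1) (z : G) : walkAverage μ v f z ≤ 1 :=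
  calc walkAverage μ v f z ≤ ∑' e, μ e * 1 := ENNReal.tsum_le_tsum fun _ => by gcongr; exact hf _
    _ = 1 := by simp [μ.tsum_coe]

lemma tsum_sub_right (f : G → ℝ≥0∞) (w : G) : ∑' z, f (z - w) = ∑' z, f z :=
  (Equiv.subRight w).tsum_eq f

lemma tsum_walkAverage (f : G → ℝ≥0∞) : ∑' z, walkAverage μ v f z = ∑' z, f z := by
  simp only [walkAverage]
  rw [ENNReal.tsum_comm]
  simp only [ENNReal.tsum_mul_left, tsum_sub_right, ENNReal.tsum_mul_right, μ.tsum_coe, one_mul]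

/- Duality: the adjoint walk makes the steps `-v e`. -/
lemma tsum_walkAverage_mul (g f : G → ℝ≥0∞) (w : G) :
    ∑' z, walkAverage μ v g z * f (z + w) =
      walkAverage μ (-v) (fun w => ∑' z, g z * f (z + w)) w := by
  simp only [walkAverage, ← ENNReal.tsum_mul_right]
  rw [ENNReal.tsum_comm]
  simp only [mul_assoc, ENNReal.tsum_mul_left]
  refine tsum_congr fun e => ?_
  rw [← (Equiv.addRight (v e)).tsum_eq fun z => g (z - v e) * f (z + w)]
  simp [add_assoc, add_comm (v e)]

lemma le_of_walkAverage_add_le {h : ℕ → G → ℝ≥0∞} {f g : G → ℝ≥0∞} (h_zero : h 0 = 0)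
    (h_succ : ∀ n, h (n + 1) ≤ walkAverage μ v (h n) + g) (hf : walkAverage μ v f + g ≤ f)
    (n : ℕ) : h n ≤ f := by
  induction n with
  | zero => simp [h_zero]
  | succ n ih =>
    calc h (n + 1) ≤ walkAverage μ v (h n) + g := h_succ n
      _ ≤ walkAverage μ v f + g := by gcongr; exact monotone_walkAverage μ v ih
      _ ≤ f := hf

/- Summing the recursion over `G`, the linear terms cancel because `A` preserves total mass. -/
lemma mul_tsum_walkAverage_sq_le {c : ℝ≥0∞} {h : ℕ → G → ℝ≥0∞} {g : G → ℝ≥0∞} (h_zero : h 0 = 0)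
    (h_mono : Monotone h) (hg : ∑' z, g z ≠ ⊤)
    (h_succ : ∀ n z, h (n + 1) z + c * walkAverage μ v (h n) z ^ 2 ≤
      walkAverage μ v (h n) z + g z) (n : ℕ) :
    c * ∑' z, walkAverage μ v (h n) z ^ 2 ≤ ∑' z, g z := by
  have hsum (n : ℕ) : ∑' z, h (n + 1) z + c * ∑' z, walkAverage μ v (h n) z ^ 2 ≤
      ∑' z, h n z + ∑' z, g z := by
    rw [← ENNReal.tsum_mul_left, ← ENNReal.tsum_add, ← tsum_walkAverage μ v (h n),
      ← ENNReal.tsum_add]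
    exact ENNReal.tsum_le_tsum (h_succ n)
  have hfinite (n : ℕ) : ∑' z, h n z ≠ ⊤ := by
    induction n with
    | zero => simp [h_zero]
    | succ n ih =>
      exact ne_top_of_le_ne_top (ENNReal.add_ne_top.2 ⟨ih, hg⟩) (le_self_add.trans (hsum n))
  refine (ENNReal.add_le_add_iff_left (hfinite n)).1 (le_trans ?_ (hsum n))
  gcongr with z
  exact h_mono n.le_succ z

end WalkAverage

/-! ### Spatial trees -/

/-- Finite plane trees whose edges carry labels in `ι`: a vertex is `WType.mk ⟨k, e⟩ c`, where
`k` is its number of children, `e i` labels the edge to the `i`-th child and `c i` is the tree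
growing from that child. -/
abbrev SpatialTree (ι : Type*) := WType fun a : (Σ k : ℕ, Fin k → ι) => Fin a.1

namespace SpatialTree

variable {ι G : Type*}

instance [Countable ι] : Countable (SpatialTree ι) :=
  have := Encodable.ofCountable ι
  inferInstance

/-- A spatial tree amounts to the tuple of its labelled subtrees. -/
def equivTuple : (Σ k : ℕ, Fin k → ι × SpatialTree ι) ≃ SpatialTree ι where
  toFun x := .mk ⟨x.1, fun i => (x.2 i).1⟩ fun i => (x.2 i).2
  invFun | .mk a c => ⟨a.1, fun i => (a.2 i, c i)⟩
  left_inv _ := rfl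
  right_inv | .mk _ _ => rfl

lemma tsum_eq_tsum_tuple (F : SpatialTree ι → ℝ≥0∞) :
    ∑' S, F S = ∑' (k : ℕ) (x : Fin k → ι × SpatialTree ι), F (equivTuple ⟨k, x⟩) := by
  rw [← equivTuple.tsum_eq, ENNReal.tsum_sigma']

/-- The set of positions visited by a spatial tree rooted at `0`, an edge labelled `e` being
embedded as the increment `v e`. -/
def trace [AddCommGroup G] (v : ι → G) : SpatialTree ι → Set G
  | .mk a c => {z | z = 0 ∨ ∃ i, z - v (a.2 i) ∈ trace v (c i)}

/-- The weight of a tree whose root has `k` children with weight `r k`, the edges from the root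
having independent labels of law `μ` and leading to independent trees of weight `w`. -/
def graft (r : ℕ → ℝ≥0∞) (μ : PMF ι) (w : SpatialTree ι → ℝ≥0∞) : SpatialTree ι → ℝ≥0∞
  | .mk a c => r a.1 * ∏ i, (μ (a.2 i) * w (c i))

/-- The weight of a Galton–Watson tree of offspring weights `p` with independent edge labels of
law `μ`. -/
def weight (p : ℕ → ℝ≥0∞) (μ : PMF ι) : SpatialTree ι → ℝ≥0∞
  | .mk a c => p a.1 * ∏ i, (μ (a.2 i) * weight p μ (c i))

/-- The restriction of `weight p μ` to trees with fewer than `n` generations. -/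
def truncatedWeight (p : ℕ → ℝ≥0∞) (μ : PMF ι) (n : ℕ) : SpatialTree ι → ℝ≥0∞ :=
  (graft p μ)^[n] 0

lemma truncatedWeight_succ (p : ℕ → ℝ≥0∞) (μ : PMF ι) (n : ℕ) :
    truncatedWeight p μ (n + 1) = graft p μ (truncatedWeight p μ n) :=
  Function.iterate_succ_apply' _ _ _

lemma monotone_graft (r : ℕ → ℝ≥0∞) (μ : PMF ι) : Monotone (graft r μ) := by
  rintro w w' h ⟨a, c⟩
  simp only [graft]
  gcongr with i
  exact h (c i)

lemma monotone_truncatedWeight (p : ℕ → ℝ≥0∞) (μ : PMF ι) : Monotone (truncatedWeight p μ) :=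
  (monotone_graft p μ).monotone_iterate_of_le_map zero_le

lemma eventually_truncatedWeight_eq (p : ℕ → ℝ≥0∞) (μ : PMF ι) (S : SpatialTree ι) :
    ∀ᶠ n in atTop, truncatedWeight p μ n S = weight p μ S := by
  induction S with
  | mk a c ih =>
    rw [← map_add_atTop_eq_nat 1, eventually_map]
    filter_upwards [eventually_all.2 ih] with n hn
    simp only [truncatedWeight_succ, graft, weight, hn]

lemma eventually_graft_truncatedWeight_eq (p r : ℕ → ℝ≥0∞) (μ : PMF ι) (S : SpatialTree ι) :
    ∀ᶠ n in atTop, graft r μ (truncatedWeight p μ n) S = graft r μ (weight p μ) S := by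
  obtain ⟨a, c⟩ := S
  filter_upwards [eventually_all.2 fun i => eventually_truncatedWeight_eq p μ (c i)] with n hn
  simp only [graft, hn]

lemma tsum_mul_prod (μ : PMF ι) (w : SpatialTree ι → ℝ≥0∞) :
    ∑' x : ι × SpatialTree ι, μ x.1 * w x.2 = ∑' S, w S := by
  simp only [ENNReal.tsum_prod', ENNReal.tsum_mul_left, ENNReal.tsum_mul_right, μ.tsum_coe, one_mul]

lemma tsum_graft (r : ℕ → ℝ≥0∞) (μ : PMF ι) (w : SpatialTree ι → ℝ≥0∞) :
    ∑' S, graft r μ w S = ∑' k, r k * (∑' S, w S) ^ k := by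
  rw [tsum_eq_tsum_tuple]
  refine tsum_congr fun k => ?_
  simp only [equivTuple, Equiv.coe_fn_mk, graft, ENNReal.tsum_mul_left]
  rw [tsum_fin_prod fun _ (x : ι × SpatialTree ι) => μ x.1 * w x.2]
  simp [tsum_mul_prod]

lemma tsum_graft_le_one {r : ℕ → ℝ≥0∞} (hr : ∑' k, r k ≤ 1) (μ : PMF ι)
    {w : SpatialTree ι → ℝ≥0∞} (hw : ∑' S, w S ≤ 1) : ∑' S, graft r μ w S ≤ 1 := by
  rw [tsum_graft]
  refine le_trans (ENNReal.tsum_le_tsum fun k => ?_) hr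
  exact mul_le_of_le_one_right' (pow_le_one₀ zero_le hw)

lemma tsum_truncatedWeight_le_one {p : ℕ → ℝ≥0∞} (hp : ∑' k, p k ≤ 1) (μ : PMF ι) (n : ℕ) :
    ∑' S, truncatedWeight p μ n S ≤ 1 := by
  induction n with
  | zero => simp [truncatedWeight]
  | succ n ih =>
    rw [truncatedWeight_succ]
    exact tsum_graft_le_one hp μ ih

end SpatialTree

open SpatialTree

/-! ### Hitting probabilities of branching random walks -/

section Hitting

variable {ι G : Type*} [AddCommGroup G] {p r : ℕ → ℝ≥0∞} (μ : PMF ι) (v : ι → G)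

/-- The weight of the spatial trees rooted at `0` that visit `z`. -/
def hit (w : SpatialTree ι → ℝ≥0∞) (z : G) : ℝ≥0∞ :=
  ∑' S, {S | z ∈ trace v S}.indicator w S

lemma monotone_hit : Monotone (hit v) :=
  fun _ _ h _ => ENNReal.tsum_le_tsum fun _ => indicator_le_indicator (h _)

lemma hit_zero : hit v 0 = 0 := by
  funext z
  simp [hit]

lemma hit_le_tsum (w : SpatialTree ι → ℝ≥0∞) (z : G) : hit v w z ≤ ∑' S, w S :=
  ENNReal.tsum_le_tsum fun _ => indicator_le_self _ _ _

lemma tsum_indicator_child (w : SpatialTree ι → ℝ≥0∞) (z : G) :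
    ∑' x, {x : ι × SpatialTree ι | z - v x.1 ∈ trace v x.2}.indicator
      (fun x => μ x.1 * w x.2) x = walkAverage μ v (hit v w) z := by
  simp only [walkAverage, hit, ENNReal.tsum_prod', ← ENNReal.tsum_mul_left]
  refine tsum_congr fun e => tsum_congr fun S => ?_
  classical simp [indicator_apply]

lemma hit_graft {z : G} (hz : z ≠ 0) (r : ℕ → ℝ≥0∞) (w : SpatialTree ι → ℝ≥0∞) :
    hit v (graft r μ w) z = ∑' k, r k * tupleHit (fun x : ι × SpatialTree ι => μ x.1 * w x.2)
      {x | z - v x.1 ∈ trace v x.2} k := by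
  rw [hit, tsum_eq_tsum_tuple]
  refine tsum_congr fun k => ?_
  rw [tupleHit, ← ENNReal.tsum_mul_left]
  refine tsum_congr fun x => ?_
  rw [← indicator_const_mul]
  classical simp [indicator_apply, equivTuple, trace, graft, hz]

lemma hit_graft_add_le {z : G} (hz : z ≠ 0) (r : ℕ → ℝ≥0∞) {w : SpatialTree ι → ℝ≥0∞}
    (hw : ∑' S, w S ≤ 1) :
    hit v (graft r μ w) z + (∑' k, {k | 2 ≤ k}.indicator r k) * walkAverage μ v (hit v w) z ^ 2 ≤
      (∑' k, k * r k) * walkAverage μ v (hit v w) z := by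
  rw [hit_graft μ v hz, ← ENNReal.tsum_mul_right, ← ENNReal.tsum_mul_right, ← ENNReal.tsum_add,
    ← tsum_indicator_child]
  refine ENNReal.tsum_le_tsum fun k => ?_
  set E := {x : ι × SpatialTree ι | z - v x.1 ∈ trace v x.2}
  have hbonferroni := tupleHit_add_indicator_le ((tsum_mul_prod μ w).trans_le hw) E k
  calc _ = r k * (tupleHit (fun x => μ x.1 * w x.2) E k +
        {j | 2 ≤ j}.indicator (fun _ => (∑' x, E.indicator (fun x => μ x.1 * w x.2) x) ^ 2) k) := by
        rw [mul_add]
        simp [indicator_apply]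
    _ ≤ r k * (k * ∑' x, E.indicator (fun x => μ x.1 * w x.2) x) := by gcongr
    _ = _ := by ring

lemma hit_truncatedWeight_le_one (hp : ∑' k, p k ≤ 1) (n : ℕ) (z : G) :
    hit v (truncatedWeight p μ n) z ≤ 1 :=
  (hit_le_tsum v _ z).trans (tsum_truncatedWeight_le_one hp μ n)

lemma hit_truncatedWeight_succ_add_le (hp : ∑' k, p k ≤ 1) (hmean : ∑' k, k * p k ≤ 1) (n : ℕ)
    (z : G) :
    hit v (truncatedWeight p μ (n + 1)) z + (∑' k, {k | 2 ≤ k}.indicator p k) *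
        walkAverage μ v (hit v (truncatedWeight p μ n)) z ^ 2 ≤
      walkAverage μ v (hit v (truncatedWeight p μ n)) z + ({0} : Set G).indicator 1 z := by
  by_cases hz : z = 0
  · subst hz
    have hone := walkAverage_le_one μ v (hit_truncatedWeight_le_one μ v hp n) 0
    have htail : ∑' k, {k | 2 ≤ k}.indicator p k ≤ 1 :=
      (ENNReal.tsum_le_tsum fun _ => indicator_le_self _ _ _).trans hp
    rw [indicator_of_mem (mem_singleton 0), add_comm, sq, ← mul_assoc]
    exact add_le_add (mul_le_of_le_one_left' (mul_le_one' htail hone))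
      (hit_truncatedWeight_le_one μ v hp _ 0)
  · rw [indicator_of_notMem (by simpa using hz), add_zero, truncatedWeight_succ]
    exact (hit_graft_add_le μ v hz p (tsum_truncatedWeight_le_one hp μ n)).trans
      (mul_le_of_le_one_left' hmean)

lemma hit_graft_le {w : SpatialTree ι → ℝ≥0∞} (hw : ∑' S, w S ≤ 1) (hr : ∑' k, r k ≤ 1) (z : G) :
    hit v (graft r μ w) z ≤
      ({0} : Set G).indicator 1 z + (∑' k, k * r k) * walkAverage μ v (hit v w) z := by
  by_cases hz : z = 0
  · rw [indicator_of_mem (by simpa using hz)]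
    exact (hit_le_tsum v _ z).trans ((tsum_graft_le_one hr μ hw).trans le_self_add)
  · exact (le_self_add.trans (hit_graft_add_le μ v hz r hw)).trans le_add_self

end Hitting

/-! ### Intersections of two independent traces -/

section Intersection

variable {ι G : Type*} [AddCommGroup G] {p r : ℕ → ℝ≥0∞} {μ : PMF ι} {v : ι → G}

lemma tsum_indicator_zero_mul (f : G → ℝ≥0∞) (w : G) :
    ∑' z, ({0} : Set G).indicator 1 z * f (z + w) = f w := by
  rw [tsum_eq_single 0 fun z hz => by simp [hz]]
  simp

lemma hit_truncatedWeight_succ_le (hp : ∑' k, p k ≤ 1) (hmean : ∑' k, k * p k ≤ 1) (n : ℕ) :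
    hit v (truncatedWeight p μ (n + 1)) ≤
      walkAverage μ v (hit v (truncatedWeight p μ n)) + ({0} : Set G).indicator 1 :=
  fun z => le_self_add.trans (hit_truncatedWeight_succ_add_le μ v hp hmean n z)

lemma tsum_hit_graft_sq_le (hp : ∑' k, p k ≤ 1) (hmean : ∑' k, k * p k ≤ 1)
    (hr : ∑' k, r k ≤ 1) (n : ℕ) :
    ∑' z, hit v (graft r μ (truncatedWeight p μ n)) z ^ 2 ≤
      3 * (1 + (∑' k, k * r k) ^ 2 * (∑' k, {k | 2 ≤ k}.indicator p k)⁻¹) := by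
  have hdelta : ∑' z, ({0} : Set G).indicator (1 : G → ℝ≥0∞) z = 1 := by
    simp [← tsum_subtype]
  have hwalk : ∑' z, walkAverage μ v (hit v (truncatedWeight p μ n)) z ^ 2 ≤
      (∑' k, {k | 2 ≤ k}.indicator p k)⁻¹ := by
    rw [ENNReal.le_inv_iff_mul_le, mul_comm, ← hdelta]
    exact mul_tsum_walkAverage_sq_le μ v (hit_zero v)
      ((monotone_hit v).comp (monotone_truncatedWeight p μ)) (by simp [hdelta])
      (hit_truncatedWeight_succ_add_le μ v hp hmean) n
  calc ∑' z, hit v (graft r μ (truncatedWeight p μ n)) z ^ 2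
      ≤ ∑' z, 3 * (({0} : Set G).indicator 1 z +
          (∑' k, k * r k) ^ 2 * walkAverage μ v (hit v (truncatedWeight p μ n)) z ^ 2) := by
        refine ENNReal.tsum_le_tsum fun z => ?_
        have hdelta_sq : ({0} : Set G).indicator (1 : G → ℝ≥0∞) z ^ 2 =
            ({0} : Set G).indicator 1 z := by
          by_cases hz : z = 0 <;> simp [hz]
        calc hit v (graft r μ (truncatedWeight p μ n)) z ^ 2 ≤ _ :=
              pow_le_pow_left₀ zero_le
                (hit_graft_le μ v (tsum_truncatedWeight_le_one hp μ n) hr z) 2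
          _ ≤ _ := add_sq_le_three_mul _ _
          _ = _ := by rw [hdelta_sq, mul_pow]
    _ = 3 * (1 + (∑' k, k * r k) ^ 2 *
          ∑' z, walkAverage μ v (hit v (truncatedWeight p μ n)) z ^ 2) := by
        rw [ENNReal.tsum_mul_left, ENNReal.tsum_add, hdelta, ENNReal.tsum_mul_left]
    _ ≤ _ := by gcongr

lemma tsum_mul_translate_le (f : G → ℝ≥0∞) (x y : G) :
    ∑' z, f (z - x) * f (z - y) ≤ 2 * ∑' z, f z ^ 2 :=
  calc ∑' z, f (z - x) * f (z - y) ≤ ∑' z, (f (z - x) ^ 2 + f (z - y) ^ 2) :=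
        ENNReal.tsum_le_tsum fun _ => mul_le_sq_add_sq _ _
    _ = 2 * ∑' z, f z ^ 2 := by
        rw [ENNReal.tsum_add, tsum_sub_right (fun z => f z ^ 2), tsum_sub_right (fun z => f z ^ 2),
          two_mul]

lemma tsum_hit_truncatedWeight_mul_le (hp : ∑' k, p k ≤ 1) (hmean : ∑' k, k * p k ≤ 1)
    {f ψ : G → ℝ≥0∞} (hψ : walkAverage μ (-v) ψ + f ≤ ψ) (n : ℕ) (w : G) :
    ∑' z, hit v (truncatedWeight p μ n) z * f (z + w) ≤ ψ w := by
  refine le_of_walkAverage_add_le μ (-v) (f := ψ) (g := f)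
    (h := fun n w => ∑' z, hit v (truncatedWeight p μ n) z * f (z + w)) ?_ (fun n w => ?_) hψ n w
  · funext w
    simp [truncatedWeight, hit_zero]
  · calc ∑' z, hit v (truncatedWeight p μ (n + 1)) z * f (z + w)
        ≤ ∑' z, (walkAverage μ v (hit v (truncatedWeight p μ n)) z +
            ({0} : Set G).indicator 1 z) * f (z + w) := by
          gcongr with z
          exact hit_truncatedWeight_succ_le hp hmean n z
      _ = _ := by
          simp only [add_mul, ENNReal.tsum_add, tsum_walkAverage_mul, tsum_indicator_zero_mul]
          rfl

lemma hit_graft_truncatedWeight_le (hp : ∑' k, p k ≤ 1) (hmean : ∑' k, k * p k ≤ 1)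
    (hr : ∑' k, r k ≤ 1) {f : G → ℝ≥0∞}
    (hf : walkAverage μ v f + ({0} : Set G).indicator 1 ≤ f) (n : ℕ) (z : G) :
    hit v (graft r μ (truncatedWeight p μ n)) z ≤ (1 + ∑' k, k * r k) * f z := by
  have hle : hit v (truncatedWeight p μ n) ≤ f :=
    le_of_walkAverage_add_le μ v (hit_zero v) (hit_truncatedWeight_succ_le hp hmean) hf n
  calc hit v (graft r μ (truncatedWeight p μ n)) z
      ≤ ({0} : Set G).indicator 1 z +
          (∑' k, k * r k) * walkAverage μ v (hit v (truncatedWeight p μ n)) z :=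
        hit_graft_le μ v (tsum_truncatedWeight_le_one hp μ n) hr z
    _ ≤ f z + (∑' k, k * r k) * f z := by
        gcongr
        · exact le_add_self.trans (hf z)
        · exact (monotone_walkAverage μ v hle z).trans (le_self_add.trans (hf z))
    _ = (1 + ∑' k, k * r k) * f z := by ring

lemma tsum_hit_graft_mul_le (hp : ∑' k, p k ≤ 1) (hmean : ∑' k, k * p k ≤ 1)
    (hr : ∑' k, r k ≤ 1) {f ψ : G → ℝ≥0∞} (hψ : walkAverage μ (-v) ψ + f ≤ ψ) (n : ℕ) (w : G) :
    ∑' z, hit v (graft r μ (truncatedWeight p μ n)) z * f (z + w) ≤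
      (1 + ∑' k, k * r k) * ψ w := by
  set σ := ∑' k, k * r k
  set h := hit v (truncatedWeight p μ n)
  calc ∑' z, hit v (graft r μ (truncatedWeight p μ n)) z * f (z + w)
      ≤ ∑' z, (({0} : Set G).indicator 1 z + σ * walkAverage μ v h z) * f (z + w) := by
        gcongr with z
        exact hit_graft_le μ v (tsum_truncatedWeight_le_one hp μ n) hr z
    _ = f w + σ * walkAverage μ (-v) (fun w => ∑' z, h z * f (z + w)) w := by
        simp only [add_mul, ENNReal.tsum_add, mul_assoc, ENNReal.tsum_mul_left,
          tsum_walkAverage_mul, tsum_indicator_zero_mul]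
    _ ≤ ψ w + σ * ψ w := by
        gcongr
        · exact le_add_self.trans (hψ w)
        · exact (monotone_walkAverage μ (-v) (tsum_hit_truncatedWeight_mul_le hp hmean hψ n)
            w).trans (le_self_add.trans (hψ w))
    _ = (1 + σ) * ψ w := by ring

lemma tsum_hit_graft_mul_hit_graft_le (hp : ∑' k, p k ≤ 1) (hmean : ∑' k, k * p k ≤ 1)
    (hr : ∑' k, r k ≤ 1) {f ψ : G → ℝ≥0∞}
    (hf : walkAverage μ v f + ({0} : Set G).indicator 1 ≤ f)
    (hψ : walkAverage μ (-v) ψ + f ≤ ψ) (n : ℕ) (x y : G) :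
    ∑' z, hit v (graft r μ (truncatedWeight p μ n)) (z - x) *
        hit v (graft r μ (truncatedWeight p μ n)) (z - y) ≤
      (1 + ∑' k, k * r k) ^ 2 * ψ (x - y) := by
  set b := hit v (graft r μ (truncatedWeight p μ n))
  calc ∑' z, b (z - x) * b (z - y) = ∑' z, b z * b (z + (x - y)) := by
        rw [← (Equiv.addRight x).tsum_eq]
        simp [add_sub_assoc]
    _ ≤ ∑' z, (1 + ∑' k, k * r k) * (b z * f (z + (x - y))) := by
        refine ENNReal.tsum_le_tsum fun z => ?_
        rw [mul_left_comm]
        gcongr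
        exact hit_graft_truncatedWeight_le hp hmean hr hf n _
    _ ≤ (1 + ∑' k, k * r k) * ((1 + ∑' k, k * r k) * ψ (x - y)) := by
        rw [ENNReal.tsum_mul_left]
        gcongr
        exact tsum_hit_graft_mul_le hp hmean hr hψ n _
    _ = (1 + ∑' k, k * r k) ^ 2 * ψ (x - y) := by ring

lemma tsum_le_of_eventually_eq {α : Type*} {f : ℕ → α → ℝ≥0∞} {F : α → ℝ≥0∞} {K : ℝ≥0∞}
    (hF : ∀ a, ∀ᶠ n in atTop, f n a = F a) (hK : ∀ n, ∑' a, f n a ≤ K) : ∑' a, F a ≤ K := by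
  rw [ENNReal.tsum_eq_iSup_sum]
  refine iSup_le fun s => ?_
  obtain ⟨n, hn⟩ := ((Filter.eventually_all_finset s).2 fun a _ => hF a).exists
  rw [← Finset.sum_congr rfl hn]
  exact (ENNReal.sum_le_tsum s).trans (hK n)

/-- The number of points visited both by the spatial tree `q.1` rooted at `x` and by the spatial
tree `q.2` rooted at `y`. -/
def commonCount (v : ι → G) (x y : G) (q : SpatialTree ι × SpatialTree ι) : ℕ :=
  ({z | z - x ∈ trace v q.1} ∩ {z | z - y ∈ trace v q.2}).ncard

lemma tsum_mul_commonCount_le (w w' : SpatialTree ι → ℝ≥0∞) (x y : G) :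
    ∑' q : SpatialTree ι × SpatialTree ι, w q.1 * w' q.2 * commonCount v x y q ≤
      ∑' z, hit v w (z - x) * hit v w' (z - y) := by
  have hcount (q : SpatialTree ι × SpatialTree ι) : (commonCount v x y q : ℝ≥0∞) ≤
      ∑' z, ({z | z - x ∈ trace v q.1} ∩ {z | z - y ∈ trace v q.2}).indicator 1 z := by
    rw [← tsum_subtype, Pi.one_def, ENNReal.tsum_set_one]
    exact_mod_cast ncard_le_encard _
  calc ∑' q : SpatialTree ι × SpatialTree ι, w q.1 * w' q.2 * commonCount v x y q
      ≤ ∑' q : SpatialTree ι × SpatialTree ι, w q.1 * w' q.2 *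
          ∑' z, ({z | z - x ∈ trace v q.1} ∩ {z | z - y ∈ trace v q.2}).indicator 1 z := by
        gcongr with q
        exact hcount q
    _ = ∑' z, ∑' q : SpatialTree ι × SpatialTree ι,
          {S | z - x ∈ trace v S}.indicator w q.1 * {S | z - y ∈ trace v S}.indicator w' q.2 := by
        simp only [← ENNReal.tsum_mul_left]
        rw [ENNReal.tsum_comm]
        refine tsum_congr fun z => tsum_congr fun q => ?_
        by_cases hx : z - x ∈ trace v q.1 <;> by_cases hy : z - y ∈ trace v q.2 <;> simp [hx, hy]
    _ = _ := by
        simp only [hit, ENNReal.tsum_prod', ENNReal.tsum_mul_left, ENNReal.tsum_mul_right]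

lemma tsum_graft_weight_mul_commonCount_le {K : ℝ≥0∞} (x y : G)
    (hK : ∀ n, ∑' z, hit v (graft r μ (truncatedWeight p μ n)) (z - x) *
      hit v (graft r μ (truncatedWeight p μ n)) (z - y) ≤ K) :
    ∑' q : SpatialTree ι × SpatialTree ι, graft r μ (weight p μ) q.1 *
      graft r μ (weight p μ) q.2 * commonCount v x y q ≤ K := by
  refine tsum_le_of_eventually_eq (fun q => ?_) fun n =>
    (tsum_mul_commonCount_le (v := v) _ _ x y).trans (hK n)
  filter_upwards [eventually_graft_truncatedWeight_eq p r μ q.1,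
    eventually_graft_truncatedWeight_eq p r μ q.2] with n h1 h2
  rw [h1, h2]

end Intersection

section LatticeIntersection

variable {d : ℕ}

lemma walkAverage_neg_latticeStep [NeZero d] (f : Zd d → ℝ≥0∞) :
    walkAverage (PMF.uniformOfFintype (Dir d)) (-latticeStep) f =
      walkAverage (PMF.uniformOfFintype (Dir d)) latticeStep f := by
  funext z
  rw [walkAverage, ← ((Equiv.refl (Fin d)).prodCongr (Equiv.neg ℤˣ)).tsum_eq]
  simp [walkAverage, latticeStep, ← Pi.single_neg]

lemma walkAverage_uniformOfFintype_ofReal [NeZero d] {f : Zd d → ℝ} (hf : 0 ≤ f) (z : Zd d) :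
    walkAverage (PMF.uniformOfFintype (Dir d)) latticeStep (fun x => ENNReal.ofReal (f x)) z =
      ENNReal.ofReal (((2 * d : ℕ) : ℝ)⁻¹ * ∑ e : Dir d, f (z - latticeStep e)) := by
  have hd : (0 : ℝ) < (2 * d : ℕ) := by exact_mod_cast Nat.mul_pos two_pos (NeZero.pos d)
  rw [ENNReal.ofReal_mul (by positivity), ENNReal.ofReal_inv_of_pos hd, ENNReal.ofReal_natCast,
    ENNReal.ofReal_sum_of_nonneg fun e _ => hf _, Finset.mul_sum, walkAverage, tsum_fintype]
  simp only [PMF.uniformOfFintype_apply, card_dir]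

lemma exists_walkAverage_supersolutions (d : ℕ) [NeZero d] (hd : 5 ≤ d) :
    ∃ (K : ℝ) (f ψ : Zd d → ℝ≥0∞),
      walkAverage (PMF.uniformOfFintype (Dir d)) latticeStep f + ({0} : Set (Zd d)).indicator 1 ≤
        f ∧
      walkAverage (PMF.uniformOfFintype (Dir d)) (-latticeStep) ψ + f ≤ ψ ∧
      ∀ x ≠ 0, ψ x ≤ ENNReal.ofReal (K * √(sqNorm x) ^ (-((d : ℝ) - 4))) := by
  obtain ⟨K, f, ψ, hf, hψ, hf_super, hψ_super, hψ_le⟩ := exists_supersolutions d hd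
  refine ⟨K, fun x => ENNReal.ofReal (f x), fun x => ENNReal.ofReal (ψ x), fun z => ?_,
    fun z => ?_, fun x hx => ENNReal.ofReal_le_ofReal (hψ_le x hx)⟩
  · have hdelta : ({0} : Set (Zd d)).indicator 1 z =
        ENNReal.ofReal (({0} : Set (Zd d)).indicator 1 z) := by
      by_cases hz : z = 0 <;> simp [hz]
    rw [Pi.add_apply, walkAverage_uniformOfFintype_ofReal hf, hdelta,
      ← ENNReal.ofReal_add (mul_nonneg (by positivity) (Finset.sum_nonneg fun e _ => hf _))
        (indicator_nonneg (by simp) z)]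
    exact ENNReal.ofReal_le_ofReal (hf_super z)
  · rw [walkAverage_neg_latticeStep, Pi.add_apply, walkAverage_uniformOfFintype_ofReal hψ,
      ← ENNReal.ofReal_add (mul_nonneg (by positivity) (Finset.sum_nonneg fun e _ => hψ _)) (hf z)]
    exact ENNReal.ofReal_le_ofReal (hψ_super z)

lemma euclDist_eq_sqrt_sqNorm (x y : Zd d) : euclDist x y = √(sqNorm (x - y)) := by
  simp [euclDist, sqNorm]

lemma one_le_euclDist {x y : Zd d} (hxy : x ≠ y) : 1 ≤ euclDist x y := by
  rw [euclDist_eq_sqrt_sqNorm]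
  exact Real.one_le_sqrt.2 (one_le_sqNorm (sub_ne_zero.2 hxy))

/-- The mean number of common points of the bushes rooted at `x` and `y`: the roots have `k`
children with weight `r k`, each generating a Galton–Watson tree of offspring weights `p`, and
the edges carry independent uniform steps. -/
def meanCommonCount [NeZero d] (p r : ℕ → ℝ≥0∞) (x y : Zd d) : ℝ≥0∞ :=
  ∑' q : SpatialTree (Dir d) × SpatialTree (Dir d),
    graft r (PMF.uniformOfFintype (Dir d)) (weight p (PMF.uniformOfFintype (Dir d))) q.1 *
      graft r (PMF.uniformOfFintype (Dir d)) (weight p (PMF.uniformOfFintype (Dir d))) q.2 *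
      commonCount latticeStep x y q

variable {p r : ℕ → ℝ≥0∞}

lemma meanCommonCount_le_of_le_four [NeZero d] (hd : d ≤ 4) (hp : ∑' k, p k ≤ 1)
    (hmean : ∑' k, k * p k ≤ 1) (htail : ∑' k, {k | 2 ≤ k}.indicator p k ≠ 0)
    (hr : ∑' k, r k ≤ 1) (hrmean : ∑' k, k * r k ≠ ⊤) :
    ∃ C : ℝ, ∀ x y : Zd d, x ≠ y →
      meanCommonCount p r x y ≤ ENNReal.ofReal (C * euclDist x y ^ (-((d : ℝ) - 4))) := by
  set K := 2 * (3 * (1 + (∑' k, k * r k) ^ 2 * (∑' k, {k | 2 ≤ k}.indicator p k)⁻¹))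
  have hK : K ≠ ⊤ := by
    simp [K, ENNReal.mul_eq_top, ENNReal.add_eq_top, hrmean, htail]
  refine ⟨K.toReal, fun x y hxy => ?_⟩
  have hpow : 1 ≤ euclDist x y ^ (-((d : ℝ) - 4)) :=
    Real.one_le_rpow (one_le_euclDist hxy) (by simpa using hd)
  calc meanCommonCount p r x y ≤ K :=
        tsum_graft_weight_mul_commonCount_le x y fun n =>
          (tsum_mul_translate_le _ x y).trans
            (mul_le_mul_right (tsum_hit_graft_sq_le hp hmean hr n) 2)
    _ = ENNReal.ofReal K.toReal := (ENNReal.ofReal_toReal hK).symm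
    _ ≤ _ := ENNReal.ofReal_le_ofReal (le_mul_of_one_le_right ENNReal.toReal_nonneg hpow)

lemma meanCommonCount_le_of_five_le [NeZero d] (hd : 5 ≤ d) (hp : ∑' k, p k ≤ 1)
    (hmean : ∑' k, k * p k ≤ 1) (hr : ∑' k, r k ≤ 1) (hrmean : ∑' k, k * r k ≠ ⊤) :
    ∃ C : ℝ, ∀ x y : Zd d, x ≠ y →
      meanCommonCount p r x y ≤ ENNReal.ofReal (C * euclDist x y ^ (-((d : ℝ) - 4))) := by
  obtain ⟨K, f, ψ, hf, hψ, hψ_le⟩ := exists_walkAverage_supersolutions d hd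
  have hfactor : (1 + ∑' k, k * r k) ^ 2 ≠ ⊤ := by simp [hrmean]
  refine ⟨((1 + ∑' k, k * r k) ^ 2).toReal * K, fun x y hxy => ?_⟩
  calc meanCommonCount p r x y ≤ (1 + ∑' k, k * r k) ^ 2 * ψ (x - y) :=
        tsum_graft_weight_mul_commonCount_le x y fun n =>
          tsum_hit_graft_mul_hit_graft_le hp hmean hr hf hψ n x y
    _ ≤ (1 + ∑' k, k * r k) ^ 2 * ENNReal.ofReal (K * euclDist x y ^ (-((d : ℝ) - 4))) := by
        rw [euclDist_eq_sqrt_sqNorm]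
        gcongr
        exact hψ_le _ (sub_ne_zero.2 hxy)
    _ = _ := by
        rw [mul_assoc, ENNReal.ofReal_mul ENNReal.toReal_nonneg, ENNReal.ofReal_toReal hfactor]

lemma exists_meanCommonCount_le [NeZero d] (hp : ∑' k, p k ≤ 1) (hmean : ∑' k, k * p k ≤ 1)
    (htail : ∑' k, {k | 2 ≤ k}.indicator p k ≠ 0) (hr : ∑' k, r k ≤ 1)
    (hrmean : ∑' k, k * r k ≠ ⊤) :
    ∃ C : ℝ, 0 ≤ C ∧ ∀ x y : Zd d, x ≠ y →
      meanCommonCount p r x y ≤ ENNReal.ofReal (C * euclDist x y ^ (-((d : ℝ) - 4))) := by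
  obtain ⟨C, hC⟩ : ∃ C : ℝ, ∀ x y : Zd d, x ≠ y →
      meanCommonCount p r x y ≤ ENNReal.ofReal (C * euclDist x y ^ (-((d : ℝ) - 4))) := by
    rcases le_or_gt d 4 with hd | hd
    · exact meanCommonCount_le_of_le_four hd hp hmean htail hr hrmean
    · exact meanCommonCount_le_of_five_le hd hp hmean hr hrmean
  refine ⟨max C 0, le_max_right C 0, fun x y hxy => (hC x y hxy).trans ?_⟩
  have hpow : 0 ≤ euclDist x y ^ (-((d : ℝ) - 4)) := Real.rpow_nonneg (Real.sqrt_nonneg _) _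
  gcongr
  exact le_max_left C 0

end LatticeIntersection

/-! ### Coding spatial trees by words -/

/-- The law of `Z̃ - 1`, the number of children of the root of a bush. -/
def sizeBiasedPred (p : PMF ℕ) (k : ℕ) : ℝ≥0∞ := ((k + 1 : ℕ) : ℝ≥0∞) * p (k + 1)

namespace SpatialTree

variable {ι G : Type*}

/-- The vertices of a spatial tree in the coding of plane trees by words. -/
def words : SpatialTree ι → Set (List ℕ)
  | .mk a c => insert [] (⋃ i : Fin a.1, List.cons (i : ℕ) '' words (c i))

lemma nil_mem_words (S : SpatialTree ι) : [] ∈ words S := by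
  cases S
  exact mem_insert _ _

lemma finite_words (S : SpatialTree ι) : (words S).Finite := by
  induction S with
  | mk a c ih => exact (finite_iUnion fun i => (ih i).image _).insert _

lemma ncard_words_pos (S : SpatialTree ι) : 0 < (words S).ncard :=
  (ncard_pos (finite_words S)).2 ⟨_, nil_mem_words S⟩

variable {a : Σ k : ℕ, Fin k → ι} {c : Fin a.1 → SpatialTree ι}

lemma cons_mem_words_mk {j : ℕ} {w : List ℕ} :
    j :: w ∈ words (.mk a c) ↔ ∃ h : j < a.1, w ∈ words (c ⟨j, h⟩) := by
  simp only [words, mem_insert_iff, reduceCtorEq, mem_iUnion, mem_image, List.cons.injEq, false_or]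
  constructor
  · rintro ⟨i, w, hw, rfl, rfl⟩
    exact ⟨i.2, hw⟩
  · rintro ⟨h, hw⟩
    exact ⟨⟨j, h⟩, w, hw, rfl, rfl⟩

/-- The position of a vertex of a spatial tree rooted at `0`, an edge labelled `e` being embedded
as the increment `v e` (junk value `0` off the tree). -/
def position [AddCommGroup G] (v : ι → G) : SpatialTree ι → List ℕ → G
  | .mk _ _, [] => 0
  | .mk a c, j :: w => if h : j < a.1 then v (a.2 ⟨j, h⟩) + position v (c ⟨j, h⟩) w else 0

lemma position_nil [AddCommGroup G] (v : ι → G) (S : SpatialTree ι) : position v S [] = 0 := by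
  cases S
  rfl

lemma image_position_words [AddCommGroup G] (v : ι → G) (S : SpatialTree ι) :
    position v S '' words S = trace v S := by
  induction S with
  | mk a c ih =>
    ext z
    constructor
    · rintro ⟨_ | ⟨j, w⟩, hw, rfl⟩
      · exact Or.inl rfl
      · obtain ⟨hj, hw⟩ := cons_mem_words_mk.1 hw
        refine Or.inr ⟨⟨j, hj⟩, ?_⟩
        rw [← ih]
        exact ⟨w, hw, by simp [position, hj]⟩
    · rintro (rfl | ⟨i, hi⟩)
      · exact ⟨[], nil_mem_words _, rfl⟩
      · rw [← ih] at hi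
        obtain ⟨w, hw, hz⟩ := hi
        exact ⟨i :: w, cons_mem_words_mk.2 ⟨i.2, hw⟩, by simp [position, hz]⟩

lemma childCount_words_nil : childCount (words (.mk a c)) [] = a.1 := by
  have hchildren : {j | [] ++ [j] ∈ words (.mk a c)} = Iio a.1 := by
    ext j
    exact cons_mem_words_mk.trans ⟨fun ⟨h, _⟩ => h, fun h => ⟨h, nil_mem_words _⟩⟩
  rw [childCount, hchildren, ncard_Iio_nat]

lemma childCount_words_cons (i : Fin a.1) (w : List ℕ) :
    childCount (words (.mk a c)) (i :: w) = childCount (words (c i)) w := by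
  simp only [childCount, List.cons_append, cons_mem_words_mk, i.2, exists_true_left]

lemma pairwise_disjoint_cons_image {k : ℕ} (s : Fin k → Set (List ℕ)) :
    Pairwise (Function.onFun Disjoint fun i : Fin k => List.cons (i : ℕ) '' s i) := by
  intro i j hij
  rw [Function.onFun, disjoint_left]
  rintro _ ⟨w, _, rfl⟩ ⟨w', _, h⟩
  exact hij (Fin.ext (List.cons.inj h).1.symm)

lemma nil_notMem_iUnion_cons_image {k : ℕ} (s : Fin k → Set (List ℕ)) :
    [] ∉ ⋃ i : Fin k, List.cons (i : ℕ) '' s i := by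
  simp

lemma finprod_mem_iUnion_cons_image (p : ℕ → ℝ≥0∞) :
    ∏ᶠ w ∈ ⋃ i : Fin a.1, List.cons (i : ℕ) '' words (c i), p (childCount (words (.mk a c)) w) =
      ∏ i, ∏ᶠ w ∈ words (c i), p (childCount (words (c i)) w) := by
  rw [finprod_mem_iUnion (pairwise_disjoint_cons_image _) fun i => (finite_words _).image _,
    finprod_eq_prod_of_fintype]
  refine Finset.prod_congr rfl fun i _ => ?_
  rw [finprod_mem_image List.cons_injective.injOn]
  simp only [childCount_words_cons]

lemma ncard_words_mk_sub_one :
    (words (.mk a c)).ncard - 1 = ∑ i, ((words (c i)).ncard - 1 + 1) := by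
  rw [words, ncard_insert_of_notMem (nil_notMem_iUnion_cons_image _)
    (finite_iUnion fun i => (finite_words _).image _),
    ncard_iUnion_of_finite (fun i => (finite_words _).image _) (pairwise_disjoint_cons_image _),
    finsum_eq_sum_of_fintype, Nat.add_sub_cancel]
  refine Finset.sum_congr rfl fun i _ => ?_
  rw [ncard_image_of_injective _ List.cons_injective, Nat.sub_add_cancel (ncard_words_pos _)]

variable {μ : PMF ι} {q : ℝ≥0∞}

lemma weight_eq_gwWeight_mul_pow (p : PMF ℕ) (hμ : ∀ e, μ e = q) (S : SpatialTree ι) :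
    weight p μ S = gwWeight p (words S) * q ^ ((words S).ncard - 1) := by
  induction S with
  | mk a c ih =>
    have hroot : gwWeight p (words (.mk a c)) = p a.1 * ∏ i, gwWeight p (words (c i)) := by
      rw [gwWeight, finprod_mem_congr (words.eq_1 a c) fun _ _ => rfl,
        finprod_mem_insert _ (nil_notMem_iUnion_cons_image _)
          (finite_iUnion fun i => (finite_words _).image _),
        childCount_words_nil, finprod_mem_iUnion_cons_image]
      rfl
    rw [weight, hroot, ncard_words_mk_sub_one, mul_assoc, ← Finset.prod_pow_eq_pow_sum,
      ← Finset.prod_mul_distrib]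
    congr! 2 with i
    rw [ih i, hμ, pow_succ]
    ring

lemma graft_sizeBiasedPred_weight (p : PMF ℕ) (hμ : ∀ e, μ e = q) (S : SpatialTree ι) :
    graft (sizeBiasedPred p) μ (weight p μ) S =
      bushWeight p (words S) * q ^ ((words S).ncard - 1) := by
  obtain ⟨a, c⟩ := S
  have hdiff : words (.mk a c) \ {[]} = ⋃ i : Fin a.1, List.cons (i : ℕ) '' words (c i) :=
    insert_sdiff_self_of_notMem (nil_notMem_iUnion_cons_image _)
  rw [graft, bushWeight, hdiff, childCount_words_nil, finprod_mem_iUnion_cons_image,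
    ncard_words_mk_sub_one, mul_assoc (_ * _), ← Finset.prod_pow_eq_pow_sum,
    ← Finset.prod_mul_distrib, sizeBiasedPred]
  congr! 2 with i
  rw [weight_eq_gwWeight_mul_pow p hμ, gwWeight, hμ, pow_succ]
  ring

end SpatialTree

/-- The tree of the descendants of the `j`-th child of the root. -/
def childSubtree (t : Set (List ℕ)) (j : ℕ) : Set (List ℕ) := {w | j :: w ∈ t}

lemma ncard_childSubtree_lt {t : Set (List ℕ)} (hroot : [] ∈ t) (hfin : t.Finite) (j : ℕ) :
    (childSubtree t j).ncard < t.ncard := by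
  rw [← ncard_image_of_injective _ (List.cons_injective (a := j))]
  refine ncard_lt_ncard ⟨image_subset_iff.2 fun _ => id, fun h => ?_⟩ hfin
  obtain ⟨w, -, hw⟩ := h hroot
  exact List.cons_ne_nil _ _ hw

namespace IsPlaneTree

variable {t : Set (List ℕ)}

lemma singleton_mem (ht : IsPlaneTree t) {j : ℕ} {w : List ℕ} (hw : j :: w ∈ t) : [j] ∈ t := by
  induction w using List.reverseRecOn with
  | nil => exact hw
  | append_singleton w k ih => exact ih (ht.2.1 (j :: w) k hw)

lemma subtree (ht : IsPlaneTree t) {j : ℕ} (hj : [j] ∈ t) : IsPlaneTree (childSubtree t j) :=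
  ⟨hj, fun w => ht.2.1 (j :: w), fun w => ht.2.2 (j :: w)⟩

lemma exists_singleton_mem_iff_lt (ht : IsPlaneTree t) (hfin : t.Finite) :
    ∃ k, ∀ j, [j] ∈ t ↔ j < k := by
  have hchildren : {j | [j] ∈ t}.Finite := hfin.preimage (List.singleton_injective.injOn)
  have hlower : IsLowerSet {j | [j] ∈ t} := fun k j hjk hk => ht.2.2 [] j k hjk hk
  obtain huniv | ⟨k, hk⟩ := hlower.eq_univ_or_Iio
  · exact absurd (huniv ▸ hchildren) infinite_univ
  · exact ⟨k, fun j => Set.ext_iff.1 hk j⟩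

lemma exists_words_eq {ι G : Type*} [AddCommGroup G] {v : ι → G} {g : List ℕ → G}
    (ht : IsPlaneTree t) (hfin : t.Finite)
    (hg : ∀ w ∈ t, w ≠ [] → g w - g w.dropLast ∈ range v) :
    ∃ S : SpatialTree ι, words S = t ∧ ∀ w ∈ t, g w = g [] + position v S w := by
  induction hn : t.ncard using Nat.strong_induction_on generalizing t g with
  | h n ih =>
    obtain ⟨k, hk⟩ := ht.exists_singleton_mem_iff_lt hfin
    have hsub (i : Fin k) : ∃ S : SpatialTree ι, words S = childSubtree t i ∧
        ∀ w ∈ childSubtree t i, g (i :: w) = g [(i : ℕ)] + position v S w := by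
      refine ih _ (hn ▸ ncard_childSubtree_lt ht.1 hfin i) (ht.subtree ((hk i).2 i.2))
        (hfin.preimage List.cons_injective.injOn) (fun w hw hne => ?_) rfl
      simpa [List.dropLast_cons_of_ne_nil hne] using hg (i :: w) hw (List.cons_ne_nil _ _)
    choose c hwords hpos using hsub
    have hstep (i : Fin k) : g [(i : ℕ)] - g [] ∈ range v :=
      hg [(i : ℕ)] ((hk i).2 i.2) (List.cons_ne_nil _ _)
    choose e he using hstep
    refine ⟨.mk ⟨k, e⟩ c, Set.ext ?_, ?_⟩
    · rintro (_ | ⟨j, w⟩)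
      · simp [nil_mem_words, ht.1]
      · simp only [cons_mem_words_mk, hwords]
        exact ⟨fun ⟨_, hw⟩ => hw, fun hw => ⟨(hk j).1 (ht.singleton_mem hw), hw⟩⟩
    · rintro (_ | ⟨j, w⟩) hw
      · simp [position_nil]
      · have hj : j < k := (hk j).1 (ht.singleton_mem hw)
        simp only [position, hj, dif_pos, hpos ⟨j, hj⟩ w hw, he]
        abel

end IsPlaneTree

lemma IsUnitStep.mem_range_latticeStep {d : ℕ} {z : Zd d} (hz : IsUnitStep z) :
    z ∈ range (latticeStep (d := d)) := by
  obtain ⟨i, hne, hi⟩ := hz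
  have hsingle : z = Pi.single i (z i) := by
    funext j
    rcases eq_or_ne j i with rfl | hj
    · simp
    · simp [hj, hne j hj]
  rcases hi with hi | hi
  · exact ⟨(i, 1), by rw [hsingle, hi]; rfl⟩
  · exact ⟨(i, -1), by rw [hsingle, hi]; rfl⟩

/-! ### Moments of the offspring law -/

section OffspringLaw

variable {p : PMF ℕ}

lemma HasMeanOne.tsum_natCast_mul (h : HasMeanOne p) : ∑' k : ℕ, (k : ℝ≥0∞) * p k = 1 := by
  have hsummable : Summable fun k : ℕ => (k : ℝ) * (p k).toReal := by
    by_contra hnot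
    exact zero_ne_one ((tsum_eq_zero_of_not_summable hnot).symm.trans h)
  calc ∑' k : ℕ, (k : ℝ≥0∞) * p k = ∑' k : ℕ, ENNReal.ofReal (k * (p k).toReal) := by
        refine tsum_congr fun k => ?_
        rw [ENNReal.ofReal_mul (by positivity), ENNReal.ofReal_natCast,
          ENNReal.ofReal_toReal (p.apply_ne_top k)]
    _ = ENNReal.ofReal (∑' k : ℕ, k * (p k).toReal) :=
        (ENNReal.ofReal_tsum_of_nonneg (fun k => by positivity) hsummable).symm
    _ = 1 := by rw [show ∑' k : ℕ, (k : ℝ) * (p k).toReal = 1 from h, ENNReal.ofReal_one]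

lemma FiniteSecondMoment.tsum_sq_mul_ne_top (h : FiniteSecondMoment p) :
    ∑' k : ℕ, (k : ℝ≥0∞) ^ 2 * p k ≠ ⊤ := by
  convert h.tsum_ofReal_ne_top using 3 with k
  rw [ENNReal.ofReal_mul (by positivity), ENNReal.ofReal_pow (by positivity),
    ENNReal.ofReal_natCast, ENNReal.ofReal_toReal (p.apply_ne_top k)]

lemma HasMeanOne.tsum_sizeBiasedPred_le_one (h : HasMeanOne p) :
    ∑' k, sizeBiasedPred p k ≤ 1 :=
  (ENNReal.tsum_comp_le_tsum_of_injective (add_left_injective 1)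
    fun k : ℕ => (k : ℝ≥0∞) * p k).trans h.tsum_natCast_mul.le

lemma FiniteSecondMoment.tsum_mul_sizeBiasedPred_ne_top (h : FiniteSecondMoment p) :
    ∑' k : ℕ, k * sizeBiasedPred p k ≠ ⊤ := by
  refine ne_top_of_le_ne_top h.tsum_sq_mul_ne_top ?_
  calc ∑' k : ℕ, k * sizeBiasedPred p k
      ≤ ∑' k : ℕ, ((k + 1 : ℕ) : ℝ≥0∞) ^ 2 * p (k + 1) := by
        refine ENNReal.tsum_le_tsum fun k => ?_
        rw [sizeBiasedPred, ← mul_assoc, sq]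
        gcongr
        exact k.le_succ
    _ ≤ ∑' k : ℕ, (k : ℝ≥0∞) ^ 2 * p k :=
        ENNReal.tsum_comp_le_tsum_of_injective (add_left_injective 1)
          fun k : ℕ => (k : ℝ≥0∞) ^ 2 * p k

lemma HasMeanOne.tsum_indicator_two_le_ne_zero (h : HasMeanOne p) (hp : p 1 ≠ 1) :
    ∑' k, {k | 2 ≤ k}.indicator p k ≠ 0 := by
  intro hzero
  refine hp ?_
  rw [← h.tsum_natCast_mul, tsum_eq_single 1, Nat.cast_one, one_mul]
  intro k hk
  have hpk := ENNReal.tsum_eq_zero.1 hzero k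
  rcases lt_or_ge k 2 with hlt | hge
  · simp [show k = 0 by omega]
  · rw [indicator_of_mem (by exact hge)] at hpk
    simp [hpk]

end OffspringLaw

/-! ### Two independent bushes -/

/- `TwoBushModel` does not make the trees random variables, so events are replaced by their
measurable hulls. -/
lemma exists_measurable_majorant {Ω α : Type*} [MeasurableSpace Ω] [Countable α] (P : Measure Ω)
    {A : α → Set Ω} (hA : ∀ ω, ∃ a, ω ∈ A a) {N : α → ℝ≥0∞} {f : Ω → ℝ≥0∞}
    (hf : ∀ a, ∀ ω ∈ A a, f ω ≤ N a) :
    ∃ F : Ω → ℝ≥0∞, Measurable F ∧ f ≤ F ∧ ∫⁻ ω, F ω ∂P = ∑' a, N a * P (A a) := by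
  have hmeas (a : α) : Measurable ((toMeasurable P (A a)).indicator fun _ => N a) :=
    measurable_const.indicator (measurableSet_toMeasurable P (A a))
  refine ⟨fun ω => ∑' a, (toMeasurable P (A a)).indicator (fun _ => N a) ω,
    Measurable.tsum hmeas, fun ω => ?_, ?_⟩
  · obtain ⟨a, ha⟩ := hA ω
    calc f ω ≤ N a := hf a ω ha
      _ = (toMeasurable P (A a)).indicator (fun _ => N a) ω :=
          (indicator_of_mem (subset_toMeasurable P _ ha) fun _ => N a).symm
      _ ≤ _ := ENNReal.le_tsum a
  · rw [lintegral_tsum fun a => (hmeas a).aemeasurable]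
    simp only [lintegral_indicator_const (measurableSet_toMeasurable P _), measure_toMeasurable]

namespace TwoBushModel

variable {d : ℕ} {p : PMF ℕ} {x y : Zd d} (M : TwoBushModel d p x y)

attribute [local instance] mΩ

/-- The common points of the traces of the two bushes. -/
def intersection (ω : M.Ω) : Set (Zd d) := (M.emb1 ω '' M.tree1 ω) ∩ (M.emb2 ω '' M.tree2 ω)

/-- The event that the two bushes are the spatial trees `q.1` and `q.2`, rooted at `x` and `y`. -/
def codedBy (q : SpatialTree (Dir d) × SpatialTree (Dir d)) : Set M.Ω :=
  {ω | M.tree1 ω = words q.1 ∧ (∀ w ∈ words q.1, M.emb1 ω w = x + position latticeStep q.1 w) ∧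
    M.tree2 ω = words q.2 ∧ ∀ w ∈ words q.2, M.emb2 ω w = y + position latticeStep q.2 w}

lemma exists_mem_codedBy (ω : M.Ω) : ∃ q, ω ∈ M.codedBy q := by
  obtain ⟨S, hS, hposS⟩ := (M.htree1 ω).1.exists_words_eq (M.htree1 ω).2
    fun w hw hne => (M.hemb1 ω w hw hne).mem_range_latticeStep
  obtain ⟨T, hT, hposT⟩ := (M.htree2 ω).1.exists_words_eq (M.htree2 ω).2
    fun w hw hne => (M.hemb2 ω w hw hne).mem_range_latticeStep
  rw [M.hroot1] at hposS
  rw [M.hroot2] at hposT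
  exact ⟨(S, T), hS.symm, hS ▸ hposS, hT.symm, hT ▸ hposT⟩

lemma ncard_intersection_of_mem_codedBy {q : SpatialTree (Dir d) × SpatialTree (Dir d)} {ω : M.Ω}
    (hω : ω ∈ M.codedBy q) : (M.intersection ω).ncard = commonCount latticeStep x y q := by
  have himage (S : SpatialTree (Dir d)) (x : Zd d) (g : List ℕ → Zd d)
      (hg : ∀ w ∈ words S, g w = x + position latticeStep S w) :
      g '' words S = {z | z - x ∈ trace latticeStep S} := by
    ext z
    rw [Set.mem_ofPred_eq, ← image_position_words]
    exact exists_congr fun w => and_congr_right fun hw => by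
      rw [hg w hw, eq_sub_iff_add_eq, add_comm]
  obtain ⟨htree1, hemb1, htree2, hemb2⟩ := hω
  rw [intersection, htree1, htree2, himage _ _ _ hemb1, himage _ _ _ hemb2, commonCount]

lemma measure_codedBy_le [NeZero d] (q : SpatialTree (Dir d) × SpatialTree (Dir d)) :
    M.P (M.codedBy q) ≤
      graft (sizeBiasedPred p) (PMF.uniformOfFintype (Dir d))
          (weight p (PMF.uniformOfFintype (Dir d))) q.1 *
        graft (sizeBiasedPred p) (PMF.uniformOfFintype (Dir d))
          (weight p (PMF.uniformOfFintype (Dir d))) q.2 := by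
  rcases (M.codedBy q).eq_empty_or_nonempty with hempty | ⟨ω, htree1, hemb1, htree2, hemb2⟩
  · simp [hempty]
  have hstep (e : Dir d) : PMF.uniformOfFintype (Dir d) e = ((2 * d : ℕ) : ℝ≥0∞)⁻¹ := by
    rw [PMF.uniformOfFintype_apply, card_dir]
  have hevent : M.codedBy q = {ω' | M.tree1 ω' = words q.1 ∧
      (∀ w ∈ words q.1, M.emb1 ω' w = M.emb1 ω w) ∧
      M.tree2 ω' = words q.2 ∧ ∀ w ∈ words q.2, M.emb2 ω' w = M.emb2 ω w} := by
    simp +contextual only [codedBy, hemb1, hemb2]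
  rw [hevent, M.hlaw _ _ (htree1 ▸ (M.htree1 ω).1) (finite_words _) (htree2 ▸ (M.htree2 ω).1)
    (finite_words _) _ _ (M.hroot1 ω) (htree1 ▸ M.hemb1 ω) (M.hroot2 ω) (htree2 ▸ M.hemb2 ω),
    graft_sizeBiasedPred_weight p hstep, graft_sizeBiasedPred_weight p hstep, pow_add,
    mul_mul_mul_comm]

lemma exists_measurable_ncard_le [NeZero d] :
    ∃ F : M.Ω → ℝ≥0∞, Measurable F ∧ (∀ ω, ((M.intersection ω).ncard : ℝ≥0∞) ≤ F ω) ∧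
      ∫⁻ ω, F ω ∂M.P ≤ meanCommonCount p (sizeBiasedPred p) x y := by
  obtain ⟨F, hF, hle, hint⟩ := exists_measurable_majorant M.P M.exists_mem_codedBy
    (N := fun q => (commonCount latticeStep x y q : ℝ≥0∞))
    (f := fun ω => ((M.intersection ω).ncard : ℝ≥0∞))
    fun q ω hω => (congrArg Nat.cast (M.ncard_intersection_of_mem_codedBy hω)).le
  refine ⟨F, hF, hle, hint.trans_le (ENNReal.tsum_le_tsum fun q => ?_)⟩
  rw [mul_comm]
  gcongr
  exact M.measure_codedBy_le q

lemma integral_ncard_intersection_le [NeZero d] {K : ℝ} (hK : 0 ≤ K)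
    (h : meanCommonCount p (sizeBiasedPred p) x y ≤ ENNReal.ofReal K) :
    ∫ ω, ((M.intersection ω).ncard : ℝ) ∂M.P ≤ K := by
  obtain ⟨F, -, hle, hint⟩ := M.exists_measurable_ncard_le
  refine (Real.le_norm_self _).trans ((norm_integral_le_lintegral_norm _).trans
    (ENNReal.toReal_le_of_le_ofReal hK ((lintegral_mono fun ω => ?_).trans (hint.trans h))))
  simpa using hle ω

lemma measure_intersection_ne_empty_le [NeZero d] {K : ℝ} (hK : 0 ≤ K)
    (h : meanCommonCount p (sizeBiasedPred p) x y ≤ ENNReal.ofReal K) :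
    (M.P {ω | M.intersection ω ≠ ∅}).toReal ≤ K := by
  obtain ⟨F, hF, hle, hint⟩ := M.exists_measurable_ncard_le
  have hsub : {ω | M.intersection ω ≠ ∅} ⊆ {ω | 1 ≤ F ω} := fun ω hω => by
    have hfin : (M.intersection ω).Finite := ((M.htree1 ω).2.image _).subset inter_subset_left
    refine le_trans ?_ (hle ω)
    exact_mod_cast (ncard_pos hfin).2 (nonempty_iff_ne_empty.2 hω)
  refine ENNReal.toReal_le_of_le_ofReal hK ?_
  calc M.P {ω | M.intersection ω ≠ ∅} ≤ 1 * M.P {ω | 1 ≤ F ω} := by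
        rw [one_mul]
        exact measure_mono hsub
    _ ≤ ∫⁻ ω, F ω ∂M.P := mul_meas_ge_le_lintegral hF 1
    _ ≤ ENNReal.ofReal K := hint.trans h

end TwoBushModel

theorem expected_intersection_of_independent_bushes_general
    (d : ℕ) (p : PMF ℕ) (hmean : HasMeanOne p) (hnontriv : p 1 < 1) (hsq : FiniteSecondMoment p) :
    ∃ C : ℝ, ∀ (x y : Zd d), x ≠ y → ∀ M : TwoBushModel d p x y,
      (∫ ω, (((M.emb1 ω '' M.tree1 ω) ∩ (M.emb2 ω '' M.tree2 ω)).ncard : ℝ) ∂M.P)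
          ≤ C * Real.rpow (euclDist x y) (-((d : ℝ) - 4)) ∧
      (M.P {ω | (M.emb1 ω '' M.tree1 ω) ∩ (M.emb2 ω '' M.tree2 ω) ≠ ∅}).toReal
          ≤ C * Real.rpow (euclDist x y) (-((d : ℝ) - 4)) := by
  rcases eq_zero_or_neZero d with rfl | _
  · exact ⟨0, fun x y hxy => absurd (Subsingleton.elim x y) hxy⟩
  obtain ⟨C, hC, hbound⟩ := exists_meanCommonCount_le (d := d) p.tsum_coe.le
    hmean.tsum_natCast_mul.le (hmean.tsum_indicator_two_le_ne_zero hnontriv.ne)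
    hmean.tsum_sizeBiasedPred_le_one hsq.tsum_mul_sizeBiasedPred_ne_top
  refine ⟨C, fun x y hxy M => ?_⟩
  have hK : 0 ≤ C * euclDist x y ^ (-((d : ℝ) - 4)) :=
    mul_nonneg hC (Real.rpow_nonneg (Real.sqrt_nonneg _) _)
  exact ⟨M.integral_ncard_intersection_le hK (hbound x y hxy),
    M.measure_intersection_ne_empty_le hK (hbound x y hxy)⟩

/-!
STATEMENT 14.  Fix `d ≥ 3`, `E[Z²] < ∞`.  There exists `C < ∞` such that for
`x ≠ y` and independent `B(x)`, `B(y)`: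
`E[|B(x) ∩ B(y)|] ≤ C |x-y|^{-(d-4)}` and hence
`q(x,y) = P[B(x) ∩ B(y) ≠ ∅] ≤ C |x-y|^{-(d-4)}`.
-/
theorem expected_intersection_of_independent_bushes
    (d : ℕ) (hd : 3 ≤ d) (p : PMF ℕ)
    (hmean : HasMeanOne p) (hnontriv : p 1 < 1)
    (hsq : FiniteSecondMoment p) (hvar : PosVariance p) :
    ∃ C : ℝ, ∀ (x y : Zd d), x ≠ y → ∀ M : TwoBushModel d p x y,
      (∫ ω, (((M.emb1 ω '' M.tree1 ω) ∩ (M.emb2 ω '' M.tree2 ω)).ncard : ℝ) ∂M.P)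
          ≤ C * Real.rpow (euclDist x y) (-((d : ℝ) - 4)) ∧
      (M.P {ω | (M.emb1 ω '' M.tree1 ω) ∩ (M.emb2 ω '' M.tree2 ω) ≠ ∅}).toReal
          ≤ C * Real.rpow (euclDist x y) (-((d : ℝ) - 4)) :=
  expected_intersection_of_independent_bushes_general d p hmean hnontriv hsq
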